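/- arXiv:1707.08330 — 3 statements merged into one kernel-verified Lean document; each statement's English description precedes it below -/
import Mathlib

section
/- In the quadric intersection algebra A_f, with d_{ij} = a_ib_j − a_jb_i (coefficients ordered x₁², x₁x₂, x₁x₃, x₁x₄, x₂², x₂x₃, x₂x₄, x₃², x₃x₄, x₄²), there is a well-defined K-derivation D on A_f determined by Dp = ½[p,ε], Dq = ½[q,ε], Dr = Ds = 0, where ε = d₁₂(pr+rp) + d₁₅(ps+qr+sp+rq) + d₂₅(qs+sq). -/
/-- The relations defining the algebra `A_f` associated to a pair of quadratic forms
`f₁ = Σ_{i≤j} aᵢⱼ xᵢxⱼ`, `f₂ = Σ_{i≤j} bᵢⱼ xᵢxⱼ` in four variables.  The coefficient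
vectors `a b : Fin 10 → K` list the coefficients of the monomials in the order
`x₁², x₁x₂, x₁x₃, x₁x₄, x₂², x₂x₃, x₂x₄, x₃², x₃x₄, x₄²`.  The generators are
`p = ι 0`, `q = ι 1`, `r = ι 2`, `s = ι 3`, and the relations derive from
`fᵢ(αp+βr, αq+βs, α, β) = 0` (`i = 1,2`) together with `[αp+βr, αq+βs] = 0`. -/
def qiRel (K : Type*) [Field K] (a b : Fin 10 → K) :
    FreeAlgebra K (Fin 4) → FreeAlgebra K (Fin 4) → Prop := fun u v =>
  letI p := FreeAlgebra.ι K (0 : Fin 4)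
  letI q := FreeAlgebra.ι K (1 : Fin 4)
  letI r := FreeAlgebra.ι K (2 : Fin 4)
  letI s := FreeAlgebra.ι K (3 : Fin 4)
  letI c : K → FreeAlgebra K (Fin 4) := algebraMap K _
  v = 0 ∧ (
    u = c (a 0) * p ^ 2 + c (a 1) * (p * q) + c (a 4) * q ^ 2
        + c (a 2) * p + c (a 5) * q + c (a 7) ∨
    u = c (a 0) * (p * r + r * p) + c (a 1) * (p * s + r * q) + c (a 4) * (q * s + s * q)
        + c (a 3) * p + c (a 6) * q + c (a 2) * r + c (a 5) * s + c (a 8) ∨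
    u = c (a 0) * r ^ 2 + c (a 1) * (r * s) + c (a 4) * s ^ 2
        + c (a 3) * r + c (a 6) * s + c (a 9) ∨
    u = c (b 0) * p ^ 2 + c (b 1) * (p * q) + c (b 4) * q ^ 2
        + c (b 2) * p + c (b 5) * q + c (b 7) ∨
    u = c (b 0) * (p * r + r * p) + c (b 1) * (p * s + r * q) + c (b 4) * (q * s + s * q)
        + c (b 3) * p + c (b 6) * q + c (b 2) * r + c (b 5) * s + c (b 8) ∨
    u = c (b 0) * r ^ 2 + c (b 1) * (r * s) + c (b 4) * s ^ 2
        + c (b 3) * r + c (b 6) * s + c (b 9) ∨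
    u = p * q - q * p ∨
    u = p * s + r * q - q * r - s * p ∨
    u = r * s - s * r)

/-- The algebra `A_f` associated to a pair of quadratic forms in four variables. -/
def QIAlg (K : Type*) [Field K] (a b : Fin 10 → K) := RingQuot (qiRel K a b)

noncomputable instance (K : Type*) [Field K] (a b : Fin 10 → K) : Ring (QIAlg K a b) :=
  inferInstanceAs (Ring (RingQuot _))

noncomputable instance (K : Type*) [Field K] (a b : Fin 10 → K) : Algebra K (QIAlg K a b) :=
  inferInstanceAs (Algebra K (RingQuot _))

/-- The generator `p` of the quadric intersection algebra. -/
noncomputable def qiP (K : Type*) [Field K] (a b : Fin 10 → K) : QIAlg K a b :=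
  RingQuot.mkAlgHom K _ (FreeAlgebra.ι K 0)

/-- The generator `q` of the quadric intersection algebra. -/
noncomputable def qiQ (K : Type*) [Field K] (a b : Fin 10 → K) : QIAlg K a b :=
  RingQuot.mkAlgHom K _ (FreeAlgebra.ι K 1)

/-- The generator `r` of the quadric intersection algebra. -/
noncomputable def qiR (K : Type*) [Field K] (a b : Fin 10 → K) : QIAlg K a b :=
  RingQuot.mkAlgHom K _ (FreeAlgebra.ι K 2)

/-- The generator `s` of the quadric intersection algebra. -/
noncomputable def qiS (K : Type*) [Field K] (a b : Fin 10 → K) : QIAlg K a b :=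
  RingQuot.mkAlgHom K _ (FreeAlgebra.ι K 3)

/-- `d i j = aᵢ bⱼ − aⱼ bᵢ` (1-based indices, as in the paper). -/
def qiD (K : Type*) [Field K] (a b : Fin 10 → K) (i j : Fin 10) : K :=
  a i * b j - a j * b i

/-! Write `u = αp + βr` and `v = αq + βs` with central indeterminates `α`, `β`. The relations of
`A_f` say that `u` and `v` commute and satisfy `fᵢ(u, v, α, β) = 0`. Since `u` and `v` commute
with the quadratic expression `d u² + e (uv + vu) + g v² = α² η + αβ ε + β² ζ`, comparing
coefficients of `α²β` gives `[p, ε] = [η, r]` and `[q, ε] = [η, s]`. Take `Dp` and `Dq` to be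
these commutators and `Dr = Ds = 0`. On the coefficient of `α²` in a relation, which involves only
`p` and `q`, `D` acts as `[·, ε]`. The coefficient of `αβ` is, up to terms killed by `D`, obtained
from that of `β²` by replacing one factor `r` or `s` at a time by `p` or `q`, so `D` sends it to
the commutator of `η` with the coefficient of `β²`. Hence `D` respects every relation, whatever
`d`, `e`, `g` are. -/

section Pencil

attribute [local instance] LieRing.ofAssociativeRing

section Commutator

variable {A : Type*} [Ring A]

lemma lie_mul (x y z : A) : ⁅x, y * z⁆ = ⁅x, y⁆ * z + y * ⁅x, z⁆ := by
  simp only [Ring.lie_def]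
  noncomm_ring

lemma mul_lie (x y z : A) : ⁅x * y, z⁆ = x * ⁅y, z⁆ + ⁅x, z⁆ * y := by
  simp only [Ring.lie_def]
  noncomm_ring

end Commutator

/-- The identity `[αp + βr, αq + βs] = 0` in central indeterminates `α`, `β`, coefficient by
coefficient: `commute_left`, `lie_mixed` and `commute_right` are those of `α²`, `αβ` and `β²`. -/
structure IsCommutingPencil {A : Type*} [Ring A] (p q r s : A) : Prop where
  commute_left : Commute p q
  lie_mixed : ⁅p, s⁆ = ⁅q, r⁆
  commute_right : Commute r s

/-- The identity `f(αp + βr, αq + βs, α, β) = 0` in central indeterminates `α`, `β`, coefficient by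
coefficient, where `f` is the quadratic form with coefficient vector `c`, ordered as in `qiRel`:
`left`, `mixed` and `right` are those of `α²`, `αβ` and `β²`. -/
structure IsPencilOnQuadric {R A : Type*} [CommRing R] [Ring A] [Algebra R A] (c : Fin 10 → R)
    (p q r s : A) : Prop where
  left : c 0 • p ^ 2 + c 1 • (p * q) + c 4 • q ^ 2 + c 2 • p + c 5 • q + c 7 • (1 : A) = 0
  mixed : c 0 • (p * r + r * p) + c 1 • (p * s + r * q) + c 4 • (q * s + s * q)
    + c 3 • p + c 6 • q + c 2 • r + c 5 • s + c 8 • (1 : A) = 0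
  right : c 0 • r ^ 2 + c 1 • (r * s) + c 4 • s ^ 2 + c 3 • r + c 6 • s + c 9 • (1 : A) = 0

namespace IsCommutingPencil

variable {R A : Type*} [CommRing R] [Ring A] [Algebra R A] {p q r s : A}

lemma lie_left_polarization (h : IsCommutingPencil p q r s) (d e g : R) :
    ⁅p, d • (p * r + r * p) + e • (p * s + q * r + s * p + r * q) + g • (q * s + s * q)⁆ =
      ⁅d • p ^ 2 + e • (p * q + q * p) + g • q ^ 2, r⁆ := by
  simp only [pow_two, lie_add, add_lie, LieAlgebra.lie_smul, smul_lie, lie_mul, mul_lie, lie_self,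
    h.commute_left.lie_eq, h.lie_mixed]
  noncomm_ring

lemma lie_right_polarization (h : IsCommutingPencil p q r s) (d e g : R) :
    ⁅q, d • (p * r + r * p) + e • (p * s + q * r + s * p + r * q) + g • (q * s + s * q)⁆ =
      ⁅d • p ^ 2 + e • (p * q + q * p) + g • q ^ 2, s⁆ := by
  simp only [pow_two, lie_add, add_lie, LieAlgebra.lie_smul, smul_lie, lie_mul, mul_lie, lie_self,
    h.commute_left.symm.lie_eq, ← h.lie_mixed]
  noncomm_ring

end IsCommutingPencil

section Deformation

open TrivSqZeroExt

variable {R A : Type*} [CommRing R] [Ring A] [Algebra R A] {p q r s η ε : A}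

lemma IsCommutingPencil.deform (h : IsCommutingPencil p q r s)
    (hp : ⁅p, ε⁆ = ⁅η, r⁆) (hq : ⁅q, ε⁆ = ⁅η, s⁆) :
    IsCommutingPencil (A := DualNumber A) (inl p + inr ⁅p, ε⁆) (inl q + inr ⁅q, ε⁆) (inl r)
      (inl s) where
  commute_left := by
    have hε : ⁅p * q, ε⁆ = ⁅q * p, ε⁆ := by rw [h.commute_left.eq]
    rw [mul_lie, mul_lie] at hε
    ext
    · simpa using h.commute_left.eq
    · simpa [add_comm] using hε
  lie_mixed := by
    have hη : ⁅η, r * s⁆ = ⁅η, s * r⁆ := by rw [h.commute_right.eq]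
    rw [lie_mul, lie_mul, ← hp, ← hq, ← sub_eq_sub_iff_add_eq_add] at hη
    ext
    · simpa [Ring.lie_def] using h.lie_mixed
    · simpa [Ring.lie_def] using hη
  commute_right := by
    rw [Commute, SemiconjBy, ← inl_mul, ← inl_mul, h.commute_right.eq]

lemma IsPencilOnQuadric.deform {c : Fin 10 → R} (h : IsPencilOnQuadric c p q r s)
    (hp : ⁅p, ε⁆ = ⁅η, r⁆) (hq : ⁅q, ε⁆ = ⁅η, s⁆) :
    IsPencilOnQuadric (A := DualNumber A) c (inl p + inr ⁅p, ε⁆) (inl q + inr ⁅q, ε⁆) (inl r)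
      (inl s) where
  left := by
    have hε := congrArg (⁅·, ε⁆) h.left
    simp only [pow_two, add_lie, smul_lie, mul_lie, (Commute.one_left ε).lie_eq, zero_lie] at hε
    ext
    · simpa [pow_two] using h.left
    · simpa [pow_two, add_comm] using hε
  mixed := by
    have hη := congrArg (⁅η, ·⁆) h.right
    simp only [pow_two, lie_add, LieAlgebra.lie_smul, lie_mul, (Commute.one_right η).lie_eq,
      lie_zero, ← hp, ← hq] at hη
    ext
    · simpa using h.mixed
    · simpa using hη
  right := by
    have hr := congrArg (inlAlgHom R A A) h.right
    simpa using hr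

lemma snd_map_mul_of_fst_comp_eq_id {ψ : A →ₐ[R] DualNumber A}
    (hψ : (fstHom R A A).comp ψ = AlgHom.id R A) (u v : A) :
    (ψ (u * v)).snd = (ψ u).snd * v + u * (ψ v).snd := by
  have hfst (w : A) : (ψ w).fst = w := DFunLike.congr_fun hψ w
  simp [hfst, add_comm]

end Deformation

namespace QIAlg

variable {K B : Type*} [Field K] [Ring B] [Algebra K B] {a b : Fin 10 → K}

open FreeAlgebra (ι)
open TrivSqZeroExt (fstHom sndHom)

lemma forall_qiRel_map_eq_zero_iff (φ : FreeAlgebra K (Fin 4) →ₐ[K] B) :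
    (∀ u, qiRel K a b u 0 → φ u = 0) ↔
      IsPencilOnQuadric a (φ (ι K 0)) (φ (ι K 1)) (φ (ι K 2)) (φ (ι K 3)) ∧
      IsPencilOnQuadric b (φ (ι K 0)) (φ (ι K 1)) (φ (ι K 2)) (φ (ι K 3)) ∧
      IsCommutingPencil (φ (ι K 0)) (φ (ι K 1)) (φ (ι K 2)) (φ (ι K 3)) := by
  have hmixed (p q r s : B) : p * s + r * q - q * r - s * p = 0 ↔ ⁅p, s⁆ = ⁅q, r⁆ := by
    rw [← sub_eq_zero (a := ⁅p, s⁆), Ring.lie_def, Ring.lie_def]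
    abel_nf
  simp only [qiRel, true_and, forall_eq_or_imp, forall_eq, map_add, map_sub, map_mul, map_pow,
    map_smul, map_one, Algebra.algebraMap_eq_smul_one, smul_one_mul, hmixed,
    sub_eq_zero (a := _ * _)]
  exact ⟨fun ⟨a₁, a₂, a₃, b₁, b₂, b₃, c₁, c₂, c₃⟩ => ⟨⟨a₁, a₂, a₃⟩, ⟨b₁, b₂, b₃⟩, ⟨c₁, c₂, c₃⟩⟩,
    fun ⟨⟨a₁, a₂, a₃⟩, ⟨b₁, b₂, b₃⟩, ⟨c₁, c₂, c₃⟩⟩ => ⟨a₁, a₂, a₃, b₁, b₂, b₃, c₁, c₂, c₃⟩⟩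

lemma isPencil_generators :
    IsPencilOnQuadric a (qiP K a b) (qiQ K a b) (qiR K a b) (qiS K a b) ∧
      IsPencilOnQuadric b (qiP K a b) (qiQ K a b) (qiR K a b) (qiS K a b) ∧
      IsCommutingPencil (qiP K a b) (qiQ K a b) (qiR K a b) (qiS K a b) :=
  (forall_qiRel_map_eq_zero_iff (RingQuot.mkAlgHom K (qiRel K a b))).mp fun _ hu =>
    (RingQuot.mkAlgHom_rel K hu).trans (map_zero _)

lemma exists_algHom {p q r s : B} (ha : IsPencilOnQuadric a p q r s)
    (hb : IsPencilOnQuadric b p q r s) (h : IsCommutingPencil p q r s) :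
    ∃ ψ : QIAlg K a b →ₐ[K] B,
      ψ (qiP K a b) = p ∧ ψ (qiQ K a b) = q ∧ ψ (qiR K a b) = r ∧ ψ (qiS K a b) = s := by
  let φ : FreeAlgebra K (Fin 4) →ₐ[K] B := FreeAlgebra.lift K ![p, q, r, s]
  have hφ : ∀ u, qiRel K a b u 0 → φ u = 0 :=
    (forall_qiRel_map_eq_zero_iff φ).mpr (by simpa [φ] using ⟨ha, hb, h⟩)
  have hrel : ∀ ⦃u v⦄, qiRel K a b u v → φ u = φ v := by
    rintro u _ ⟨rfl, hu⟩
    rw [hφ u ⟨rfl, hu⟩, map_zero]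
  refine ⟨RingQuot.liftAlgHom K ⟨φ, hrel⟩, ?_, ?_, ?_, ?_⟩ <;>
    exact (RingQuot.liftAlgHom_mkAlgHom_apply K φ hrel _).trans (by simp [φ])

lemma algHom_ext {φ ψ : QIAlg K a b →ₐ[K] B} (hp : φ (qiP K a b) = ψ (qiP K a b))
    (hq : φ (qiQ K a b) = ψ (qiQ K a b)) (hr : φ (qiR K a b) = ψ (qiR K a b))
    (hs : φ (qiS K a b) = ψ (qiS K a b)) : φ = ψ := by
  refine RingQuot.ringQuot_ext' K φ ψ (FreeAlgebra.hom_ext (funext fun i => ?_))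
  fin_cases i
  exacts [hp, hq, hr, hs]

lemma exists_derivation_of_lie_eq {η ε : QIAlg K a b} (hp : ⁅qiP K a b, ε⁆ = ⁅η, qiR K a b⁆)
    (hq : ⁅qiQ K a b, ε⁆ = ⁅η, qiS K a b⁆) :
    ∃ D : QIAlg K a b →ₗ[K] QIAlg K a b, (∀ u v, D (u * v) = D u * v + u * D v) ∧
      D (qiP K a b) = ⁅qiP K a b, ε⁆ ∧ D (qiQ K a b) = ⁅qiQ K a b, ε⁆ ∧
      D (qiR K a b) = 0 ∧ D (qiS K a b) = 0 := by
  obtain ⟨ha, hb, h⟩ := isPencil_generators (K := K) (a := a) (b := b)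
  obtain ⟨ψ, hψp, hψq, hψr, hψs⟩ :=
    exists_algHom (ha.deform hp hq) (hb.deform hp hq) (h.deform hp hq)
  have hψ : (fstHom K (QIAlg K a b) (QIAlg K a b)).comp ψ = AlgHom.id K _ := by
    apply algHom_ext <;> simp [hψp, hψq, hψr, hψs]
  refine ⟨((sndHom (QIAlg K a b) (QIAlg K a b)).restrictScalars K).comp ψ.toLinearMap,
    snd_map_mul_of_fst_comp_eq_id hψ, ?_, ?_, ?_, ?_⟩ <;>
    simp [hψp, hψq, hψr, hψs]

end QIAlg

end Pencil

theorem qi_derivation_exists_general (K : Type*) [Field K] (a b : Fin 10 → K) (d e g : K) :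
    letI p := qiP K a b
    letI q := qiQ K a b
    letI r := qiR K a b
    letI s := qiS K a b
    letI ε : QIAlg K a b :=
      algebraMap K _ d * (p * r + r * p)
      + algebraMap K _ e * (p * s + q * r + s * p + r * q)
      + algebraMap K _ g * (q * s + s * q)
    ∃ D : QIAlg K a b →ₗ[K] QIAlg K a b,
      (∀ u v, D (u * v) = D u * v + u * D v) ∧
      D p = p * ε - ε * p ∧ D q = q * ε - ε * q ∧ D r = 0 ∧ D s = 0 := by
  simp only [← Algebra.smul_def, ← Ring.lie_def]
  obtain ⟨-, -, h⟩ := QIAlg.isPencil_generators (K := K) (a := a) (b := b)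
  exact QIAlg.exists_derivation_of_lie_eq (h.lie_left_polarization d e g)
    (h.lie_right_polarization d e g)

/-- There is a well-defined `K`-derivation `D` on the quadric intersection algebra `A_f`
determined by `Dp = ½[p,ε]`, `Dq = ½[q,ε]`, `Dr = Ds = 0`, where
`ε = d₁₂(pr+rp) + d₁₅(ps+qr+sp+rq) + d₂₅(qs+sq)` and `dᵢⱼ = aᵢbⱼ − aⱼbᵢ`. -/
theorem qi_derivation_exists (K : Type*) [Field K] (h2 : (2 : K) ≠ 0) (h3 : (3 : K) ≠ 0)
    (a b : Fin 10 → K) :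
    letI p := qiP K a b
    letI q := qiQ K a b
    letI r := qiR K a b
    letI s := qiS K a b
    letI ε : QIAlg K a b :=
      algebraMap K _ (qiD K a b 0 1) * (p * r + r * p)
      + algebraMap K _ (qiD K a b 0 4) * (p * s + q * r + s * p + r * q)
      + algebraMap K _ (qiD K a b 1 4) * (q * s + s * q)
    ∃ D : QIAlg K a b →ₗ[K] QIAlg K a b,
      (∀ u v, D (u * v) = D u * v + u * D v) ∧
      D p = (2 : K)⁻¹ • (p * ε - ε * p) ∧
      D q = (2 : K)⁻¹ • (q * ε - ε * q) ∧
      D r = 0 ∧ D s = 0 := by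
  obtain ⟨D, hmul, hp, hq, hr, hs⟩ := qi_derivation_exists_general K a b
    (qiD K a b 0 1) (qiD K a b 0 4) (qiD K a b 1 4)
  exact ⟨(2 : K)⁻¹ • D, by simp [hmul], by simp [hp], by simp [hq], by simp [hr], by simp [hs]⟩
end

section
/- Let F(x,y) = y² + a₁xy + a₃y − (x³+a₂x²+a₄x+a₆) and f(x,y,z) = x³F(z/x, y/x) the associated ternary cubic. Then there is a K-algebra isomorphism θ : A_f → Mat₃(K[x,y]/(F)) given by x ↦ [[−x₀−a₂, −1, 0],[x₀²+a₂x₀+a₄, 0, y₀],[y₀+a₁x₀+a₃, 0, x₀]] and y ↦ [[0,0,0],[−a₁,0,−1],[1,0,0]], with θ(ξ) = x₀I₃ and θ(η) = y₀I₃. -/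
/-- The relations defining the algebra `A_f` associated to the ternary cubic
`f = A x³ + B y³ + C z³ + A₂ x²y + A₃ x²z + B₁ xy² + B₃ y²z + C₁ xz² + C₂ yz² + M xyz`
(with `C ≠ 0`): the relations derive from the identity `f(α, β, αx + βy) = 0`,
with generators `x = ι 0`, `y = ι 1`. -/
def tcRel (K : Type*) [Field K] (A B C A2 A3 B1 B3 C1 C2 M : K) :
    FreeAlgebra K (Fin 2) → FreeAlgebra K (Fin 2) → Prop := fun u v =>
  letI x := FreeAlgebra.ι K (0 : Fin 2)
  letI y := FreeAlgebra.ι K (1 : Fin 2)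
  letI c : K → FreeAlgebra K (Fin 2) := algebraMap K _
  v = 0 ∧ (
    u = c C * x ^ 3 + c C1 * x ^ 2 + c A3 * x + c A ∨
    u = c C * (x ^ 2 * y + x * y * x + y * x ^ 2) + c C1 * (x * y + y * x)
        + c C2 * x ^ 2 + c M * x + c A3 * y + c A2 ∨
    u = c C * (x * y ^ 2 + y * x * y + y ^ 2 * x) + c C2 * (x * y + y * x)
        + c C1 * y ^ 2 + c M * y + c B3 * x + c B1 ∨
    u = c C * y ^ 3 + c C2 * y ^ 2 + c B3 * y + c B)

/-- The algebra `A_f` associated to a ternary cubic. -/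
def TCAlg (K : Type*) [Field K] (A B C A2 A3 B1 B3 C1 C2 M : K) :=
  RingQuot (tcRel K A B C A2 A3 B1 B3 C1 C2 M)

noncomputable instance (K : Type*) [Field K] (A B C A2 A3 B1 B3 C1 C2 M : K) :
    Ring (TCAlg K A B C A2 A3 B1 B3 C1 C2 M) := inferInstanceAs (Ring (RingQuot _))

noncomputable instance (K : Type*) [Field K] (A B C A2 A3 B1 B3 C1 C2 M : K) :
    Algebra K (TCAlg K A B C A2 A3 B1 B3 C1 C2 M) := inferInstanceAs (Algebra K (RingQuot _))

/-- The generator `x` of the ternary cubic algebra `A_f`. -/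
noncomputable def tcX (K : Type*) [Field K] (A B C A2 A3 B1 B3 C1 C2 M : K) :
    TCAlg K A B C A2 A3 B1 B3 C1 C2 M :=
  RingQuot.mkAlgHom K _ (FreeAlgebra.ι K 0)

/-- The generator `y` of the ternary cubic algebra `A_f`. -/
noncomputable def tcY (K : Type*) [Field K] (A B C A2 A3 B1 B3 C1 C2 M : K) :
    TCAlg K A B C A2 A3 B1 B3 C1 C2 M :=
  RingQuot.mkAlgHom K _ (FreeAlgebra.ι K 1)

/-- The central element `ξ` of the ternary cubic algebra. -/
noncomputable def tcXi (K : Type*) [Field K] (A B C A2 A3 B1 B3 C1 C2 M : K) :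
    TCAlg K A B C A2 A3 B1 B3 C1 C2 M :=
  letI x := tcX K A B C A2 A3 B1 B3 C1 C2 M
  letI y := tcY K A B C A2 A3 B1 B3 C1 C2 M
  letI c : K → TCAlg K A B C A2 A3 B1 B3 C1 C2 M := algebraMap K _
  c (C ^ 2) * (x * y) ^ 2
    - (c C * y ^ 2 + c C2 * y + c B3) * (c C * x ^ 2 + c C1 * x + c A3)
    + c (C * M - C1 * C2) * (x * y) + c (A3 * B3)

/-!
The `β³` and `αβ²` coefficients of `f(α, β, αx + βy) = 0` make `e = x y²` an idempotent, and there
are elements `uᵢ` in `A_f e` and `wⱼ` in `e A_f` with `wᵢ uⱼ = δᵢⱼ e` and `∑ uᵢ wᵢ = 1`. The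
products `uᵢ wⱼ` are therefore 3 × 3 matrix units, and `A_f` is the algebra of 3 × 3 matrices over
their centralizer. In this representation `y` is the matrix of `tc_iso_matrix` and `x` has the
shape `!![-t, -1, 0; p, 0, q; r, 0, s]`; the other two relations express `t`, `p` and `r` through
`s` and `q`, and say that `s` and `q` commute and satisfy the Weierstrass equation. The
representation thus factors through `θ : A_f → Mat₃(K[x, y] / (F))`, so `θ` is injective. It is
surjective because it sends the `uᵢ wⱼ` to the standard matrix units while `x₀` and `y₀` are
entries of `θ x`.
-/

section MatrixUnits

variable {K A ι : Type*} [CommRing K] [Ring A] [Algebra K A] [Fintype ι] [DecidableEq ι]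

/-- A complete system of matrix units in a ring, indexed by `ι`. -/
structure IsMatrixUnits (E : ι → ι → A) : Prop where
  mul : ∀ i j k l, E i j * E k l = if j = k then E i l else 0
  sum : ∑ i, E i i = 1

theorem isMatrixUnits_of_mul_eq {e : A} {u w : ι → A} (hu : ∀ i, u i * e = u i)
    (hwu : ∀ i j, w i * u j = if i = j then e else 0) (huw : ∑ i, u i * w i = 1) :
    IsMatrixUnits fun i j => u i * w j where
  mul i j k l := by
    calc u i * w j * (u k * w l) = u i * (w j * u k) * w l := by simp only [mul_assoc]
      _ = if j = k then u i * w l else 0 := by rw [hwu]; split_ifs <;> simp [hu]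
  sum := huw

namespace IsMatrixUnits

variable {E : ι → ι → A}

variable (K) in
/-- The coefficient ring of a system `E` of matrix units: the centralizer of the units, over which
`A` is a full matrix algebra. -/
abbrev coeff (E : ι → ι → A) : Subalgebra K A :=
  Subalgebra.centralizer K (Set.range fun p : ι × ι => E p.1 p.2)

variable (K) in
/-- The `(i, j)` coefficient of `a` with respect to a system of matrix units. -/
def entry (hE : IsMatrixUnits E) (a : A) (i j : ι) : coeff K E :=
  ⟨∑ k, E k i * a * E j k, by
    rintro _ ⟨⟨p, q⟩, rfl⟩
    simp only [Finset.mul_sum, Finset.sum_mul, ← mul_assoc, hE.mul]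
    simp [mul_assoc, hE.mul]⟩

variable (K) in
theorem eq_sum_entry_mul (hE : IsMatrixUnits E) (a : A) :
    a = ∑ i, ∑ j, (hE.entry K a i j : A) * E i j := by
  have entry_mul (i j) : (hE.entry K a i j : A) * E i j = E i i * a * E j j := by
    simp [entry, Finset.sum_mul, mul_assoc, hE.mul]
  calc a = (∑ i, E i i) * a * ∑ j, E j j := by rw [hE.sum, one_mul, mul_one]
    _ = ∑ i, ∑ j, E i i * a * E j j := by
      simp only [Finset.sum_mul, Finset.mul_sum]
      exact Finset.sum_comm
    _ = _ := by simp only [entry_mul]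

theorem entry_eq_algebraMap (hE : IsMatrixUnits E) {a : A} {j : ι} {c : ι → K}
    (h : ∀ k, a * E j k = ∑ l, c l • E l k) (i : ι) :
    hE.entry K a i j = algebraMap K _ (c i) := by
  apply Subtype.ext
  simp [entry, mul_assoc, h, Finset.mul_sum, hE.mul, ← Finset.smul_sum, hE.sum,
    Algebra.algebraMap_eq_smul_one]

theorem entry_one (hE : IsMatrixUnits E) (i j : ι) :
    hE.entry K 1 i j = if i = j then 1 else 0 := by
  have one_mul_unit : ∀ k, 1 * E j k = ∑ l, (if l = j then (1 : K) else 0) • E l k := by simp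
  rw [hE.entry_eq_algebraMap one_mul_unit]
  split_ifs <;> simp

theorem entry_mul (hE : IsMatrixUnits E) (a b : A) (i j : ι) :
    hE.entry K (a * b) i j = ∑ l, hE.entry K a i l * hE.entry K b l j := by
  apply Subtype.ext
  have entry_mul_entry (l) : (hE.entry K a i l * hE.entry K b l j : A) =
      ∑ k, E k i * a * E l l * b * E j k := by
    calc _ = ∑ k, ∑ m, E k i * a * (E l k * E m l) * b * E j m := by
          simp only [entry, Finset.sum_mul_sum, mul_assoc]
      _ = _ := by simp [hE.mul]
  simp only [AddSubmonoidClass.coe_finsetSum, MulMemClass.coe_mul, entry_mul_entry]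
  rw [Finset.sum_comm]
  simp only [entry, ← Finset.sum_mul, ← Finset.mul_sum, hE.sum, one_mul, mul_assoc]

variable (K) in
/-- The representation of `A` by matrices over the centralizer of a system of matrix units. -/
def toMatrix (hE : IsMatrixUnits E) : A →ₐ[K] Matrix ι ι (coeff K E) :=
  AlgHom.ofLinearMap
    { toFun a := Matrix.of (hE.entry K a)
      map_add' a b := by
        ext i j
        simp [entry, mul_add, add_mul, Finset.sum_add_distrib]
      map_smul' c a := by
        ext i j
        simp [entry, Finset.smul_sum] }
    (by
      ext i j : 1
      simp [hE.entry_one, Matrix.one_apply])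
    (fun a b => by
      ext i j : 1
      simp [hE.entry_mul, Matrix.mul_apply])

theorem toMatrix_apply (hE : IsMatrixUnits E) (a : A) (i j : ι) :
    hE.toMatrix K a i j = hE.entry K a i j :=
  rfl

variable (K) in
theorem toMatrix_injective (hE : IsMatrixUnits E) : Function.Injective (hE.toMatrix K) := by
  rw [injective_iff_map_eq_zero]
  intro a ha
  rw [hE.eq_sum_entry_mul K a]
  simp [← toMatrix_apply, ha]

end IsMatrixUnits

end MatrixUnits

theorem subalgebra_matrix_eq_top {K R n : Type*} [CommSemiring K] [Semiring R] [Algebra K R]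
    [Fintype n] [DecidableEq n] {S : Subalgebra K (Matrix n n R)}
    (hunit : ∀ i j, Matrix.single i j 1 ∈ S) {s : Set R} (hs : Algebra.adjoin K s = ⊤)
    (hentry : ∀ r ∈ s, ∃ M ∈ S, ∃ i j, M i j = r) : S = ⊤ := by
  have scalar_mem (r : R) : Matrix.diagonal (fun _ => r) ∈ S := by
    have hle : Algebra.adjoin K s ≤ S.comap (Matrix.scalarAlgHom n K) := by
      refine Algebra.adjoin_le fun r hr => ?_
      obtain ⟨M, hM, i, j, rfl⟩ := hentry r hr
      have : (Matrix.diagonal fun _ => M i j) =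
          ∑ k, Matrix.single k i 1 * M * Matrix.single j k (1 : R) := by
        simp [Matrix.single_mul_mul_single, Matrix.sum_single_eq_diagonal]
      change Matrix.diagonal (fun _ => M i j) ∈ S
      rw [this]
      exact sum_mem fun k _ => mul_mem (mul_mem (hunit k i) hM) (hunit j k)
    exact hle (hs ▸ Algebra.mem_top)
  refine eq_top_iff.mpr fun M _ => ?_
  rw [Matrix.matrix_eq_sum_single M]
  refine sum_mem fun i _ => sum_mem fun j _ => ?_
  simpa [← Matrix.smul_eq_diagonal_mul, Matrix.smul_single] using
    mul_mem (scalar_mem (M i j)) (hunit i j)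

section CubicRelations

variable {K A B : Type*} [CommRing K] [Ring A] [Algebra K A] [Ring B] [Algebra K B]
  {W : WeierstrassCurve K} {x y : A}

/-- The coefficients of `α³`, `α²β`, `αβ²`, `β³` in `f(α, β, αx + βy) = 0`, where `f` is the
ternary cubic of the Weierstrass equation of `W`. -/
structure CubicRelations (W : WeierstrassCurve K) (x y : A) : Prop where
  xxx : x ^ 3 + W.a₂ • x ^ 2 + W.a₄ • x + W.a₆ • 1 = 0
  xxy : x ^ 2 * y + x * y * x + y * x ^ 2 + W.a₂ • (x * y + y * x) - W.a₁ • x + W.a₄ • y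
    - W.a₃ • 1 = 0
  xyy : x * y ^ 2 + y * x * y + y ^ 2 * x + W.a₂ • y ^ 2 - W.a₁ • y = 1
  yyy : y ^ 3 = 0

/-- The element `x * y ^ 2`, which becomes the first diagonal matrix unit. -/
def cubicIdem (x y : A) : A := x * y ^ 2

/-- The first column of the matrix units attached to a pair satisfying the cubic relations. -/
def cubicCol (W : WeierstrassCurve K) (x y : A) : Fin 3 → A :=
  ![cubicIdem x y, -y ^ 2, y * cubicIdem x y - W.a₁ • y ^ 2]

/-- The first row of the matrix units attached to a pair satisfying the cubic relations. -/
def cubicRow (x y : A) : Fin 3 → A :=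
  ![cubicIdem x y, -(cubicIdem x y * x * (1 - cubicIdem x y)), x * y * (1 - cubicIdem x y)]

theorem y_mul_cubicCol_zero :
    y * cubicCol W x y 0 = cubicCol W x y 2 - W.a₁ • cubicCol W x y 1 := by
  simp [cubicCol]

theorem x_mul_cubicCol_one : x * cubicCol W x y 1 = -cubicCol W x y 0 := by
  simp [cubicCol, cubicIdem]

namespace CubicRelations

theorem map (h : CubicRelations W x y) (f : A →ₐ[K] B) : CubicRelations W (f x) (f y) where
  xxx := by simpa using congrArg f h.xxx
  xxy := by simpa using congrArg f h.xxy
  xyy := by simpa using congrArg f h.xyy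
  yyy := by simpa using congrArg f h.yyy

theorem idem_mul_y (h : CubicRelations W x y) : cubicIdem x y * y = 0 := by
  rw [cubicIdem, mul_assoc, ← pow_succ, h.yyy, mul_zero]

theorem y_sq_mul_x_mul_y (h : CubicRelations W x y) :
    y ^ 2 * x * y = y + W.a₁ • y ^ 2 - y * cubicIdem x y := by
  have y_mul_xyy := congrArg (y * ·) h.xyy
  have y_cube : y * (y * y) = 0 := by simpa [pow_succ, mul_assoc] using h.yyy
  have y_cube_mul : y * (y * (y * x)) = 0 := by
    simpa only [mul_assoc, zero_mul] using congrArg (· * x) y_cube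
  simp only [pow_two, mul_add, mul_sub, mul_assoc, mul_smul_comm, y_cube, y_cube_mul,
    mul_one, smul_zero, add_zero] at y_mul_xyy
  simp only [cubicIdem, pow_two, mul_assoc]
  linear_combination (norm := module) y_mul_xyy

theorem y_sq_mul_idem (h : CubicRelations W x y) : y ^ 2 * cubicIdem x y = y ^ 2 := by
  calc y ^ 2 * cubicIdem x y = y ^ 2 * x * y * y := by simp only [cubicIdem, pow_two, mul_assoc]
    _ = y ^ 2 + W.a₁ • y ^ 3 - y * (cubicIdem x y * y) := by
      rw [h.y_sq_mul_x_mul_y, sub_mul, add_mul, ← pow_two, smul_mul_assoc, ← pow_succ, mul_assoc]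
    _ = y ^ 2 := by rw [h.yyy, h.idem_mul_y, smul_zero, mul_zero, add_zero, sub_zero]

theorem idem_mul_idem (h : CubicRelations W x y) :
    cubicIdem x y * cubicIdem x y = cubicIdem x y := by
  nth_rw 1 [cubicIdem]
  rw [mul_assoc, h.y_sq_mul_idem, ← cubicIdem]

theorem idem_mul_compl (h : CubicRelations W x y) :
    cubicIdem x y * (1 - cubicIdem x y) = 0 := by
  rw [mul_sub, mul_one, h.idem_mul_idem, sub_self]

theorem y_sq_mul_compl (h : CubicRelations W x y) : y ^ 2 * (1 - cubicIdem x y) = 0 := by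
  rw [mul_sub, mul_one, h.y_sq_mul_idem, sub_self]

theorem idem_mul_x_mul_y_mul_idem (h : CubicRelations W x y) :
    cubicIdem x y * x * y * cubicIdem x y = W.a₁ • cubicIdem x y := by
  calc cubicIdem x y * x * y * cubicIdem x y = x * (y ^ 2 * x * y) * cubicIdem x y := by
        simp only [cubicIdem, mul_assoc]
    _ = x * y * cubicIdem x y + W.a₁ • (x * (y ^ 2 * cubicIdem x y))
          - x * y * (cubicIdem x y * cubicIdem x y) := by
      rw [h.y_sq_mul_x_mul_y]
      simp only [mul_add, mul_sub, add_mul, sub_mul, mul_smul_comm, smul_mul_assoc, mul_assoc]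
    _ = W.a₁ • cubicIdem x y := by
      rw [h.y_sq_mul_idem, h.idem_mul_idem, ← cubicIdem, add_sub_cancel_left]

theorem col_mul_idem (h : CubicRelations W x y) (i : Fin 3) :
    cubicCol W x y i * cubicIdem x y = cubicCol W x y i := by
  fin_cases i <;> simp [cubicCol, h.idem_mul_idem, h.y_sq_mul_idem, sub_mul, mul_assoc]

theorem y_mul_col_one (h : CubicRelations W x y) : y * cubicCol W x y 1 = 0 := by
  simp [cubicCol, ← pow_succ', h.yyy]

theorem y_mul_col_two (h : CubicRelations W x y) : y * cubicCol W x y 2 = -cubicCol W x y 1 := by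
  simp [cubicCol, mul_sub, ← pow_succ', h.yyy, ← mul_assoc, ← pow_two, h.y_sq_mul_idem]

theorem idem_mul_col (h : CubicRelations W x y) (j : Fin 3) :
    cubicIdem x y * cubicCol W x y j = if 0 = j then cubicIdem x y else 0 := by
  fin_cases j <;> simp [cubicCol, h.idem_mul_idem, pow_two, mul_sub, ← mul_assoc, h.idem_mul_y]

theorem idem_mul_x_mul_col_two (h : CubicRelations W x y) :
    cubicIdem x y * x * cubicCol W x y 2 = 0 := by
  have idem_mul_x_mul_y_sq : cubicIdem x y * x * y ^ 2 = cubicIdem x y := by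
    rw [mul_assoc, ← cubicIdem, h.idem_mul_idem]
  simp [cubicCol, mul_sub, ← mul_assoc, h.idem_mul_x_mul_y_mul_idem, idem_mul_x_mul_y_sq]

theorem row_mul_col (h : CubicRelations W x y) (i j : Fin 3) :
    cubicRow x y i * cubicCol W x y j = if i = j then cubicIdem x y else 0 := by
  have compl_mul_col (j) : (1 - cubicIdem x y) * cubicCol W x y j =
      if j = 0 then 0 else cubicCol W x y j := by
    rw [sub_mul, one_mul, h.idem_mul_col]
    fin_cases j <;> simp [cubicCol]
  fin_cases i
  · exact h.idem_mul_col j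
  · simp only [cubicRow, Fin.mk_one, Matrix.cons_val_one, Matrix.cons_val_zero, neg_mul,
      mul_assoc (_ * x), compl_mul_col]
    fin_cases j
    · simp
    · simp [mul_assoc, x_mul_cubicCol_one, h.idem_mul_col]
    · simp [h.idem_mul_x_mul_col_two]
  · simp only [cubicRow, Fin.reduceFinMk, Matrix.cons_val, mul_assoc (_ * y), compl_mul_col]
    fin_cases j
    · simp
    · simp [mul_assoc, h.y_mul_col_one]
    · simp only [Fin.reduceFinMk, Fin.reduceEq, ↓reduceIte, mul_assoc, h.y_mul_col_two, mul_neg,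
        x_mul_cubicCol_one, neg_neg]
      rfl

theorem col_two_mul_row_two (h : CubicRelations W x y) :
    cubicCol W x y 2 * cubicRow x y 2 = (y * x * y - W.a₁ • y) * (1 - cubicIdem x y) := by
  have idem_mul_x_mul_y :
      cubicIdem x y * x * y = x * y + W.a₁ • cubicIdem x y - x * y * cubicIdem x y := by
    rw [cubicIdem, mul_assoc x, mul_assoc x, h.y_sq_mul_x_mul_y, mul_sub, mul_add, mul_smul_comm,
      mul_assoc x y]
    rfl
  calc cubicCol W x y 2 * cubicRow x y 2
      = y * (cubicIdem x y * x * y) * (1 - cubicIdem x y)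
          - W.a₁ • (y ^ 2 * x * y * (1 - cubicIdem x y)) := by
        simp [cubicCol, cubicRow, sub_mul, mul_assoc]
    _ = (y * x * y - W.a₁ • y) * (1 - cubicIdem x y) := by
        rw [idem_mul_x_mul_y, h.y_sq_mul_x_mul_y]
        simp only [mul_add, add_mul, mul_sub (y), sub_mul _ _ (1 - cubicIdem x y), mul_smul_comm,
          smul_mul_assoc, mul_assoc, h.idem_mul_compl, h.y_sq_mul_compl]
        simp

theorem sum_col_mul_row (h : CubicRelations W x y) :
    ∑ i, cubicCol W x y i * cubicRow x y i = 1 := by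
  have xyy : y ^ 2 * x + (y * x * y - W.a₁ • y) = 1 - cubicIdem x y - W.a₂ • y ^ 2 := by
    rw [← h.xyy, cubicIdem]
    abel
  have col_zero_mul_row_zero : cubicCol W x y 0 * cubicRow x y 0 = cubicIdem x y :=
    h.idem_mul_idem
  have col_one_mul_row_one :
      cubicCol W x y 1 * cubicRow x y 1 = y ^ 2 * x * (1 - cubicIdem x y) := by
    simp [cubicCol, cubicRow, ← mul_assoc, h.y_sq_mul_idem]
  rw [Fin.sum_univ_three, h.col_two_mul_row_two, col_zero_mul_row_zero, col_one_mul_row_one,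
    add_assoc, ← add_mul, xyy, sub_mul, smul_mul_assoc,
    h.y_sq_mul_compl, smul_zero, sub_zero, sub_mul, h.idem_mul_compl, one_mul, sub_zero,
    add_sub_cancel]

theorem isMatrixUnits (h : CubicRelations W x y) :
    IsMatrixUnits fun i j => cubicCol W x y i * cubicRow x y j :=
  isMatrixUnits_of_mul_eq h.col_mul_idem h.row_mul_col h.sum_col_mul_row

end CubicRelations
end CubicRelations

section WeierstrassPairs

variable {K B C : Type*} [CommRing K] [Ring B] [Algebra K B] [Ring C] [Algebra K C]
  {W : WeierstrassCurve K}

/-- A commuting pair of elements satisfying the affine Weierstrass equation of `W`. -/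
structure IsWeierstrassPair (W : WeierstrassCurve K) (s q : B) : Prop where
  commute : Commute s q
  equation : q ^ 2 + W.a₁ • (s * q) + W.a₃ • q = s ^ 3 + W.a₂ • s ^ 2 + W.a₄ • s + W.a₆ • 1

/-- The matrix representing the first generator `x` of the cubic algebra at the point `(s, q)`. -/
def weierstrassX (W : WeierstrassCurve K) (s q : B) : Matrix (Fin 3) (Fin 3) B :=
  !![-s - algebraMap K B W.a₂, -1, 0;
     s ^ 2 + algebraMap K B W.a₂ * s + algebraMap K B W.a₄, 0, q;
     q + algebraMap K B W.a₁ * s + algebraMap K B W.a₃, 0, s]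

/-- The matrix representing the second generator `y` of the cubic algebra; it is the same at all
points of the curve. -/
def weierstrassY (B : Type*) [Ring B] [Algebra K B] (W : WeierstrassCurve K) :
    Matrix (Fin 3) (Fin 3) B :=
  !![0, 0, 0; -(algebraMap K B W.a₁), 0, -1; 1, 0, 0]

theorem mapMatrix_weierstrassX (φ : B →ₐ[K] C) (s q : B) :
    φ.mapMatrix (weierstrassX W s q) = weierstrassX W (φ s) (φ q) := by
  ext i j : 1
  fin_cases i <;> fin_cases j <;> simp [weierstrassX]

theorem mapMatrix_weierstrassY (φ : B →ₐ[K] C) :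
    φ.mapMatrix (weierstrassY B W) = weierstrassY C W := by
  ext i j : 1
  fin_cases i <;> fin_cases j <;> simp [weierstrassY]

namespace CubicRelations

variable {t p q r s : B}

theorem entry_zero_zero_eq
    (h : CubicRelations W !![-t, -1, 0; p, 0, q; r, 0, s] (weierstrassY B W)) :
    t = s + W.a₂ • 1 := by
  have entry_zero_two : -t + s + W.a₂ • 1 = 0 := by
    simpa [weierstrassY, pow_succ] using congrFun₂ h.xxy 0 2
  linear_combination (norm := module) -entry_zero_two

theorem entry_two_zero_eq
    (h : CubicRelations W !![-t, -1, 0; p, 0, q; r, 0, s] (weierstrassY B W)) :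
    r = q + W.a₁ • s + W.a₃ • 1 := by
  have entry_zero_zero :
      -(W.a₁ • t) + -q + (-(W.a₁ • t) + r) + W.a₂ • W.a₁ • 1 + W.a₁ • t - W.a₃ • 1 = 0 := by
    simpa [weierstrassY, pow_succ, Algebra.algebraMap_eq_smul_one] using congrFun₂ h.xxy 0 0
  linear_combination (norm := module) entry_zero_zero + W.a₁ • h.entry_zero_zero_eq

theorem entry_one_zero_eq
    (h : CubicRelations W !![-t, -1, 0; p, 0, q; r, 0, s] (weierstrassY B W)) :
    p = s ^ 2 + W.a₂ • s + W.a₄ • 1 := by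
  have entry_one_two : p + (W.a₁ • q + -s ^ 2) + -(W.a₂ • s) - W.a₁ • q + -(W.a₄ • 1) = 0 := by
    simpa [weierstrassY, pow_succ, Algebra.algebraMap_eq_smul_one] using congrFun₂ h.xxy 1 2
  linear_combination (norm := module) entry_one_two

theorem eq_weierstrassX
    (h : CubicRelations W !![-t, -1, 0; p, 0, q; r, 0, s] (weierstrassY B W)) :
    !![-t, -1, 0; p, 0, q; r, 0, s] = weierstrassX W s q := by
  simp [weierstrassX, h.entry_zero_zero_eq, h.entry_two_zero_eq, h.entry_one_zero_eq,
    Algebra.algebraMap_eq_smul_one, sub_eq_add_neg, add_comm]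

theorem isWeierstrassPair
    (h : CubicRelations W !![-t, -1, 0; p, 0, q; r, 0, s] (weierstrassY B W)) :
    IsWeierstrassPair W s q where
  commute := by
    have entry_one_zero :
        W.a₁ • p + q * s + -(q * t) + (W.a₁ • p + -(W.a₁ • t ^ 2) + (-(s * r) + r * t)) +
          (W.a₂ • q + (W.a₂ • W.a₁ • t + -(W.a₂ • r))) - W.a₁ • p + -(W.a₄ • W.a₁ • 1) = 0 := by
      simpa [weierstrassY, pow_succ, Algebra.algebraMap_eq_smul_one] using congrFun₂ h.xxy 1 0
    simp only [h.entry_zero_zero_eq, h.entry_two_zero_eq, h.entry_one_zero_eq, pow_two, mul_add,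
      add_mul, mul_smul_comm, smul_mul_assoc, mul_one, one_mul] at entry_one_zero
    exact (by linear_combination (norm := module) -entry_one_zero : s * q = q * s)
  equation := by
    have entry_two_two :
        -(r * q) + s ^ 3 + W.a₂ • s ^ 2 + W.a₄ • s + W.a₆ • 1 = 0 := by
      simpa [pow_succ, Algebra.algebraMap_eq_smul_one] using congrFun₂ h.xxx 2 2
    simp only [h.entry_two_zero_eq, add_mul, smul_mul_assoc, one_mul, ← pow_two] at entry_two_two
    linear_combination (norm := module) -entry_two_two

variable {A : Type*} [Ring A] [Algebra K A] {x y : A}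

theorem toMatrix_y (h : CubicRelations W x y) :
    h.isMatrixUnits.toMatrix K y = weierstrassY _ W := by
  set Y := h.isMatrixUnits.toMatrix K y
  have col_zero (i) : Y i 0 = algebraMap K _ (![0, -W.a₁, 1] i) :=
    h.isMatrixUnits.entry_eq_algebraMap (fun k => by
      simp [← mul_assoc, y_mul_cubicCol_zero, Fin.sum_univ_three, sub_mul, neg_add_eq_sub]) i
  have col_one (i) : Y i 1 = algebraMap K _ ((0 : Fin 3 → K) i) :=
    h.isMatrixUnits.entry_eq_algebraMap
      (fun k => by simp [← mul_assoc, h.y_mul_col_one]) i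
  have col_two (i) : Y i 2 = algebraMap K _ (![0, -1, 0] i) :=
    h.isMatrixUnits.entry_eq_algebraMap
      (fun k => by simp [← mul_assoc, h.y_mul_col_two, Fin.sum_univ_three]) i
  rw [Y.eta_fin_three]
  simp [weierstrassY, col_zero, col_one, col_two]

theorem exists_toMatrix_x_eq (h : CubicRelations W x y) :
    ∃ t p q r s, h.isMatrixUnits.toMatrix K x = !![-t, -1, 0; p, 0, q; r, 0, s] := by
  set X := h.isMatrixUnits.toMatrix K x
  have col_one (i) : X i 1 = algebraMap K _ (![-1, 0, 0] i) :=
    h.isMatrixUnits.entry_eq_algebraMap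
      (fun k => by simp [← mul_assoc, x_mul_cubicCol_one, Fin.sum_univ_three]) i
  have row_zero_mul_x_mul_col_two : cubicRow x y 0 * x * cubicCol W x y 2 = 0 :=
    h.idem_mul_x_mul_col_two
  have entry_zero_two : X 0 2 = 0 := by
    apply Subtype.ext
    calc (X 0 2 : A)
        = ∑ k, cubicCol W x y k * (cubicRow x y 0 * x * cubicCol W x y 2) * cubicRow x y k := by
          simp only [X, IsMatrixUnits.toMatrix_apply, IsMatrixUnits.entry, mul_assoc]
      _ = 0 := by simp [row_zero_mul_x_mul_col_two]
  refine ⟨-X 0 0, X 1 0, X 1 2, X 2 0, X 2 2, ?_⟩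
  rw [X.eta_fin_three]
  simp [col_one, entry_zero_two]

theorem exists_injective_algHom (h : CubicRelations W x y) :
    ∃ (C : Subalgebra K A) (s q : C) (ρ : A →ₐ[K] Matrix (Fin 3) (Fin 3) C),
      IsWeierstrassPair W s q ∧ Function.Injective ρ ∧
        ρ x = weierstrassX W s q ∧ ρ y = weierstrassY C W := by
  obtain ⟨t, p, q, r, s, hx⟩ := h.exists_toMatrix_x_eq
  have hmap := h.map (h.isMatrixUnits.toMatrix K)
  rw [hx, h.toMatrix_y] at hmap
  exact ⟨_, s, q, h.isMatrixUnits.toMatrix K, hmap.isWeierstrassPair,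
    h.isMatrixUnits.toMatrix_injective K, hx.trans hmap.eq_weierstrassX, h.toMatrix_y⟩

end CubicRelations
end WeierstrassPairs

section WeierstrassMatrices

variable {K R : Type*} [CommRing K] [CommRing R] [Algebra K R] {W : WeierstrassCurve K} {s q : R}

theorem weierstrassX_mul_weierstrassY :
    weierstrassX W s q * weierstrassY R W = !![algebraMap K R W.a₁, 0, 1; q, 0, 0; s, 0, 0] := by
  rw [weierstrassX, weierstrassY, Matrix.mul_fin_three]
  congr! 2 <;> ring_nf

theorem weierstrassY_sq : weierstrassY R W ^ 2 = !![0, 0, 0; -1, 0, 0; 0, 0, 0] := by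
  rw [pow_two, weierstrassY, Matrix.mul_fin_three]
  congr! 2 <;> ring_nf

theorem weierstrassX_sq_add :
    weierstrassX W s q ^ 2 + W.a₂ • weierstrassX W s q + W.a₄ • 1 =
      !![0, s, -q;
         q * (q + algebraMap K R W.a₁ * s + algebraMap K R W.a₃)
           - s * (s ^ 2 + algebraMap K R W.a₂ * s + algebraMap K R W.a₄),
           -(s ^ 2 + algebraMap K R W.a₂ * s), q * (s + algebraMap K R W.a₂);
         0, -(q + algebraMap K R W.a₁ * s + algebraMap K R W.a₃),
           s ^ 2 + algebraMap K R W.a₂ * s + algebraMap K R W.a₄] := by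
  rw [pow_two, weierstrassX, Matrix.mul_fin_three]
  ext i j
  fin_cases i <;> fin_cases j <;> simp [Algebra.smul_def (R := K) (A := R)] <;> ring

theorem weierstrassX_mul_sq_add (h : IsWeierstrassPair W s q) :
    weierstrassX W s q * (weierstrassX W s q ^ 2 + W.a₂ • weierstrassX W s q + W.a₄ • 1) =
      -(W.a₆ • 1) := by
  have map_a₆ : algebraMap K R W.a₆ = q ^ 2 + algebraMap K R W.a₁ * (s * q)
      + algebraMap K R W.a₃ * q - s ^ 3 - algebraMap K R W.a₂ * s ^ 2
      - algebraMap K R W.a₄ * s := by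
    have equation := h.equation
    simp only [Algebra.smul_def, mul_one] at equation
    linear_combination -equation
  rw [weierstrassX_sq_add, weierstrassX, Matrix.mul_fin_three]
  ext i j
  fin_cases i <;> fin_cases j <;> simp [Algebra.smul_def (R := K) (A := R), map_a₆] <;> ring

theorem cubicRelations_weierstrass (h : IsWeierstrassPair W s q) :
    CubicRelations W (weierstrassX W s q) (weierstrassY R W) where
  xxx := by
    have := weierstrassX_mul_sq_add h
    simpa only [mul_add, mul_smul_comm, mul_one, ← pow_two, ← pow_succ', eq_neg_iff_add_eq_zero]
      using this
  xxy := by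
    set X := weierstrassX W s q with hX
    set Y := weierstrassY R W with hY
    calc _ = (X ^ 2 + W.a₂ • X + W.a₄ • 1) * Y + Y * (X ^ 2 + W.a₂ • X + W.a₄ • 1)
          + X * Y * X - W.a₁ • X - W.a₄ • Y - W.a₃ • 1 := by
          simp only [mul_add, add_mul, mul_smul_comm, smul_mul_assoc, mul_one, one_mul]
          module
      _ = 0 := by
        rw [weierstrassX_sq_add, weierstrassX_mul_weierstrassY, hX, hY]
        simp only [weierstrassX, weierstrassY, Matrix.mul_fin_three]
        ext i j
        fin_cases i <;> fin_cases j <;> simp [Algebra.smul_def (R := K) (A := R)] <;> ring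
  xyy := by
    rw [mul_assoc (weierstrassY R W), weierstrassX_mul_weierstrassY, weierstrassY_sq]
    simp only [weierstrassX, weierstrassY, Matrix.mul_fin_three]
    ext i j
    fin_cases i <;> fin_cases j <;> simp [Algebra.smul_def (R := K) (A := R)]
    ring
  yyy := by
    rw [pow_succ, weierstrassY_sq, weierstrassY, Matrix.mul_fin_three]
    ext i j
    fin_cases i <;> fin_cases j <;> simp

theorem cubicIdem_weierstrass :
    cubicIdem (weierstrassX W s q) (weierstrassY R W) = !![1, 0, 0; 0, 0, 0; 0, 0, 0] := by
  rw [cubicIdem, weierstrassY_sq, weierstrassX, Matrix.mul_fin_three]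
  congr! 2 <;> ring_nf

theorem cubicCol_weierstrass (i : Fin 3) :
    cubicCol W (weierstrassX W s q) (weierstrassY R W) i = Matrix.single i 0 1 := by
  rw [cubicCol, cubicIdem_weierstrass, weierstrassY_sq, weierstrassY, Matrix.mul_fin_three]
  ext k l
  fin_cases i <;> fin_cases k <;> fin_cases l <;> simp [Algebra.smul_def (R := K) (A := R)]

theorem cubicRow_weierstrass (j : Fin 3) :
    cubicRow (weierstrassX W s q) (weierstrassY R W) j = Matrix.single 0 j 1 := by
  have compl : (1 - !![1, 0, 0; 0, 0, 0; 0, 0, 0] : Matrix (Fin 3) (Fin 3) R) =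
      !![0, 0, 0; 0, 1, 0; 0, 0, 1] := by
    ext k l
    fin_cases k <;> fin_cases l <;> simp
  rw [cubicRow, cubicIdem_weierstrass, weierstrassX_mul_weierstrassY, compl, weierstrassX]
  ext k l
  fin_cases j <;> fin_cases k <;> fin_cases l <;> simp

end WeierstrassMatrices

section AffineRing

variable {K B : Type*} [CommRing K] [Ring B] [Algebra K B]

/-- The affine Weierstrass polynomial of `W`, with coordinates `X 0` and `X 1`. -/
noncomputable def weierstrassPoly (W : WeierstrassCurve K) : MvPolynomial (Fin 2) K :=
  .X 1 ^ 2 + .C W.a₁ * .X 0 * .X 1 + .C W.a₃ * .X 1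
    - (.X 0 ^ 3 + .C W.a₂ * .X 0 ^ 2 + .C W.a₄ * .X 0 + .C W.a₆)

/-- The coordinate ring `K[x, y] / (F)` of the affine Weierstrass curve `W`. -/
abbrev AffineRing (W : WeierstrassCurve K) : Type _ :=
  MvPolynomial (Fin 2) K ⧸ Ideal.span {weierstrassPoly W}

/-- The class `x₀` of the first coordinate in the affine coordinate ring. -/
noncomputable abbrev affineX (W : WeierstrassCurve K) : AffineRing W :=
  Ideal.Quotient.mk _ (.X 0)

/-- The class `y₀` of the second coordinate in the affine coordinate ring. -/
noncomputable abbrev affineY (W : WeierstrassCurve K) : AffineRing W :=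
  Ideal.Quotient.mk _ (.X 1)

theorem aeval_weierstrassPoly {R : Type*} [CommRing R] [Algebra K R] (W : WeierstrassCurve K)
    (s q : R) : MvPolynomial.aeval ![s, q] (weierstrassPoly W) =
      q ^ 2 + W.a₁ • (s * q) + W.a₃ • q - (s ^ 3 + W.a₂ • s ^ 2 + W.a₄ • s + W.a₆ • 1) := by
  simp [weierstrassPoly, Algebra.smul_def, mul_assoc]

theorem isWeierstrassPair_affine (W : WeierstrassCurve K) :
    IsWeierstrassPair W (affineX W) (affineY W) where
  commute := Commute.all _ _
  equation := by
    have aeval_eq_mk : MvPolynomial.aeval ![affineX W, affineY W] =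
        Ideal.Quotient.mkₐ K (Ideal.span {weierstrassPoly W}) := by
      ext i
      fin_cases i <;> simp
    rw [← sub_eq_zero, ← aeval_weierstrassPoly, aeval_eq_mk]
    exact Ideal.Quotient.eq_zero_iff_mem.mpr (Ideal.mem_span_singleton_self _)

theorem adjoin_affine_eq_top (W : WeierstrassCurve K) :
    Algebra.adjoin K {affineX W, affineY W} = ⊤ := by
  let π := Ideal.Quotient.mkₐ K (Ideal.span {weierstrassPoly W})
  calc Algebra.adjoin K {affineX W, affineY W}
      = (Algebra.adjoin K (Set.range MvPolynomial.X)).map π := by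
        rw [AlgHom.map_adjoin, ← Set.range_comp]
        congr 1
        ext z
        simp [Fin.exists_fin_two, eq_comm, π]
    _ = ⊤ := by
        rw [MvPolynomial.adjoin_range_X, Algebra.map_top]
        exact (AlgHom.range_eq_top π).mpr (Ideal.Quotient.mkₐ_surjective K _)

open scoped IsMulCommutative in
theorem IsWeierstrassPair.exists_affineRing_algHom {W : WeierstrassCurve K} {s q : B}
    (h : IsWeierstrassPair W s q) :
    ∃ φ : AffineRing W →ₐ[K] B, φ (affineX W) = s ∧ φ (affineY W) = q := by
  have : IsMulCommutative (Algebra.adjoin K {s, q}) := Algebra.isMulCommutative_adjoin K (by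
    rintro a (rfl | rfl) b (rfl | rfl) <;> simp [h.commute.eq])
  let s' : Algebra.adjoin K {s, q} := ⟨s, Algebra.subset_adjoin (by simp)⟩
  let q' : Algebra.adjoin K {s, q} := ⟨q, Algebra.subset_adjoin (by simp)⟩
  have equation : q' ^ 2 + W.a₁ • (s' * q') + W.a₃ • q' =
      s' ^ 3 + W.a₂ • s' ^ 2 + W.a₄ • s' + W.a₆ • 1 := Subtype.ext h.equation
  have aeval_eq_zero : ∀ a ∈ Ideal.span {weierstrassPoly W},
      MvPolynomial.aeval ![s', q'] a = 0 := by
    intro a ha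
    obtain ⟨b, rfl⟩ := Ideal.mem_span_singleton.mp ha
    rw [map_mul, aeval_weierstrassPoly, equation, sub_self, zero_mul]
  exact ⟨(Subalgebra.val _).comp (Ideal.Quotient.liftₐ _ _ aeval_eq_zero),
    congrArg Subtype.val (MvPolynomial.aeval_X ![s', q'] 0),
    congrArg Subtype.val (MvPolynomial.aeval_X ![s', q'] 1)⟩

end AffineRing

section Isomorphism

variable {K A : Type*} [CommRing K] [Ring A] [Algebra K A] {W : WeierstrassCurve K} {x y : A}
  {θ : A →ₐ[K] Matrix (Fin 3) (Fin 3) (AffineRing W)}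

theorem CubicRelations.injective_algHom (h : CubicRelations W x y)
    (hgen : Algebra.adjoin K {x, y} = ⊤)
    (hθx : θ x = weierstrassX W (affineX W) (affineY W)) (hθy : θ y = weierstrassY _ W) :
    Function.Injective θ := by
  obtain ⟨C, s, q, ρ, hsq, hρ, hρx, hρy⟩ := h.exists_injective_algHom
  obtain ⟨φ, rfl, rfl⟩ := hsq.exists_affineRing_algHom
  have factor : φ.mapMatrix.comp θ = ρ := by
    refine AlgHom.ext_of_adjoin_eq_top hgen ?_
    rintro _ (rfl | rfl)
    · rw [AlgHom.comp_apply, hθx, hρx, mapMatrix_weierstrassX]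
    · rw [AlgHom.comp_apply, hθy, hρy, mapMatrix_weierstrassY]
  rw [← factor, AlgHom.coe_comp] at hρ
  exact hρ.of_comp

theorem cubicCol_mem {S : Subalgebra K A} (hx : x ∈ S) (hy : y ∈ S) (i : Fin 3) :
    cubicCol W x y i ∈ S := by
  have hy_sq := pow_mem hy 2
  have he : cubicIdem x y ∈ S := mul_mem hx hy_sq
  fin_cases i
  exacts [he, neg_mem hy_sq, sub_mem (mul_mem hy he) (S.smul_mem hy_sq _)]

theorem cubicRow_mem {S : Subalgebra K A} (hx : x ∈ S) (hy : y ∈ S) (j : Fin 3) :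
    cubicRow x y j ∈ S := by
  have he : cubicIdem x y ∈ S := mul_mem hx (pow_mem hy 2)
  have he_compl := sub_mem (one_mem S) he
  fin_cases j
  exacts [he, neg_mem (mul_mem (mul_mem he hx) he_compl), mul_mem (mul_mem hx hy) he_compl]

theorem eq_top_of_weierstrass_mem {R : Type*} [CommRing R] [Algebra K R] {s q : R}
    (hgen : Algebra.adjoin K {s, q} = ⊤) {S : Subalgebra K (Matrix (Fin 3) (Fin 3) R)}
    (hX : weierstrassX W s q ∈ S) (hY : weierstrassY R W ∈ S) : S = ⊤ := by
  have single_mem (i j) : Matrix.single i j 1 ∈ S := by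
    simpa [cubicCol_weierstrass, cubicRow_weierstrass] using
      mul_mem (cubicCol_mem (W := W) hX hY i) (cubicRow_mem hX hY j)
  refine subalgebra_matrix_eq_top single_mem hgen ?_
  rintro _ (rfl | rfl)
  exacts [⟨_, hX, 2, 2, rfl⟩, ⟨_, hX, 1, 2, rfl⟩]

theorem CubicRelations.bijective_algHom (h : CubicRelations W x y)
    (hgen : Algebra.adjoin K {x, y} = ⊤)
    (hθx : θ x = weierstrassX W (affineX W) (affineY W)) (hθy : θ y = weierstrassY _ W) :
    Function.Bijective θ :=
  ⟨h.injective_algHom hgen hθx hθy, (AlgHom.range_eq_top θ).mp <|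
    eq_top_of_weierstrass_mem (adjoin_affine_eq_top W) ⟨x, hθx⟩ ⟨y, hθy⟩⟩

end Isomorphism

section CentralElement

variable {K A B R : Type*} [CommRing K] [Ring A] [Algebra K A] [Ring B] [Algebra K B] [CommRing R]
  [Algebra K R] {W : WeierstrassCurve K} {s q : R}

/-- The element `ξ` of the cubic algebra, written in terms of the generators `x` and `y`. -/
def cubicXi (W : WeierstrassCurve K) (x y : A) : A :=
  (x * y) ^ 2 - y ^ 2 * (x ^ 2 + W.a₂ • x + W.a₄ • 1) - W.a₁ • (x * y)

theorem map_cubicXi (f : A →ₐ[K] B) (x y : A) :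
    f (cubicXi W x y) = cubicXi W (f x) (f y) := by
  simp [cubicXi]

theorem cubicXi_weierstrass :
    cubicXi W (weierstrassX W s q) (weierstrassY R W) = !![s, 0, 0; 0, s, 0; 0, 0, s] := by
  rw [cubicXi, weierstrassX_mul_weierstrassY, weierstrassY_sq, weierstrassX_sq_add, pow_two]
  ext i j
  fin_cases i <;> fin_cases j <;> simp [Algebra.smul_def (R := K) (A := R)] <;> ring

/-- The value on `cubicXi W x y` of a derivation sending `x` to the commutator `⁅x, x * y⁆` and
`y` to `⁅y * x, y⁆`. -/
def cubicXiDeriv (W : WeierstrassCurve K) (x y : A) : A :=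
  ⁅x, cubicIdem x y⁆ * (x * y) + x * y * ⁅x, cubicIdem x y⁆
    - (y * cubicIdem x y * (x ^ 2 + W.a₂ • x + W.a₄ • 1)
      + y ^ 2 * ⁅x ^ 2 + W.a₂ • x + W.a₄ • 1, x * y⁆) - W.a₁ • ⁅x, cubicIdem x y⁆

theorem map_cubicXiDeriv (f : A →ₐ[K] B) (x y : A) :
    f (cubicXiDeriv W x y) = cubicXiDeriv W (f x) (f y) := by
  simp [cubicXiDeriv, cubicIdem, Ring.lie_def]

theorem leibniz_cubicXi {x y : A} (hy : y ^ 3 = 0) {D : A →ₗ[K] A}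
    (leibniz : ∀ u v, D (u * v) = D u * v + u * D v) (hDx : D x = ⁅x, x * y⁆)
    (hDy : D y = ⁅y * x, y⁆) : D (cubicXi W x y) = cubicXiDeriv W x y := by
  have map_one : D 1 = 0 := by simpa using leibniz 1 1
  have map_x_mul_y : D (x * y) = ⁅x, cubicIdem x y⁆ := by
    rw [leibniz, hDx, hDy]
    simp only [Ring.lie_def, cubicIdem]
    noncomm_ring
  have map_y_sq : D (y ^ 2) = y * cubicIdem x y := by
    have telescope : ⁅y * x, y⁆ * y + y * ⁅y * x, y⁆ = y * (x * y ^ 2) - y ^ 3 * x := by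
      rw [Ring.lie_def]
      noncomm_ring
    rw [pow_two, leibniz, hDy, telescope, hy, zero_mul, sub_zero, cubicIdem]
  have map_quadratic : D (x ^ 2 + W.a₂ • x + W.a₄ • 1) =
      ⁅x ^ 2 + W.a₂ • x + W.a₄ • 1, x * y⁆ := by
    rw [map_add, map_add, map_smul, map_smul, map_one, pow_two, leibniz, hDx]
    simp only [Ring.lie_def, mul_add, add_mul, mul_sub, sub_mul, mul_assoc,
      smul_mul_assoc, mul_smul_comm, one_mul, mul_one]
    module
  rw [cubicXi, map_sub, map_sub, map_smul, pow_two (x * y), leibniz, leibniz (y ^ 2), map_x_mul_y,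
    map_y_sq, map_quadratic]
  rfl

theorem cubicXiDeriv_weierstrass :
    cubicXiDeriv W (weierstrassX W s q) (weierstrassY R W) =
      (2 : K) • !![q, 0, 0; 0, q, 0; 0, 0, q] + W.a₁ • !![s, 0, 0; 0, s, 0; 0, 0, s]
        + W.a₃ • 1 := by
  have lie_idem : ⁅weierstrassX W s q, (!![1, 0, 0; 0, 0, 0; 0, 0, 0] : Matrix _ _ R)⁆ =
      !![0, 1, 0;
         s ^ 2 + algebraMap K R W.a₂ * s + algebraMap K R W.a₄, 0, 0;
         q + algebraMap K R W.a₁ * s + algebraMap K R W.a₃, 0, 0] := by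
    ext i j
    fin_cases i <;> fin_cases j <;> simp [weierstrassX, Ring.lie_def]
  have y_mul_idem : weierstrassY R W * !![1, 0, 0; 0, 0, 0; 0, 0, 0] =
      !![0, 0, 0; -algebraMap K R W.a₁, 0, 0; 1, 0, 0] := by
    ext i j
    fin_cases i <;> fin_cases j <;> simp [weierstrassY, Algebra.algebraMap_eq_smul_one]
  rw [cubicXiDeriv, cubicIdem_weierstrass, lie_idem, y_mul_idem, weierstrassX_mul_weierstrassY,
    weierstrassY_sq, weierstrassX_sq_add]
  ext i j
  fin_cases i <;> fin_cases j <;>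
    simp [Algebra.smul_def (R := K) (A := R), Ring.lie_def, map_ofNat] <;> ring

end CentralElement

section TernaryCubicAlgebra

variable {K : Type*} [Field K]

theorem adjoin_tcX_tcY_eq_top {A B C A2 A3 B1 B3 C1 C2 M : K} :
    Algebra.adjoin K {tcX K A B C A2 A3 B1 B3 C1 C2 M, tcY K A B C A2 A3 B1 B3 C1 C2 M} = ⊤ := by
  let π : FreeAlgebra K (Fin 2) →ₐ[K] TCAlg K A B C A2 A3 B1 B3 C1 C2 M :=
    RingQuot.mkAlgHom K (tcRel K A B C A2 A3 B1 B3 C1 C2 M)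
  calc Algebra.adjoin K {tcX K A B C A2 A3 B1 B3 C1 C2 M, tcY K A B C A2 A3 B1 B3 C1 C2 M}
      = (Algebra.adjoin K (Set.range (FreeAlgebra.ι K))).map π := by
        rw [AlgHom.map_adjoin, ← Set.range_comp]
        congr 1
        ext z
        rw [Set.mem_range, Fin.exists_fin_two, eq_comm (b := z), eq_comm (b := z)]
        rfl
    _ = ⊤ := by
        rw [FreeAlgebra.adjoin_range_ι, Algebra.map_top]
        exact (AlgHom.range_eq_top π).mpr (RingQuot.mkAlgHom_surjective K _)

/-- The ternary cubic algebra of `f(x, y, z) = x³ F(z / x, y / x)`, where `F` is the affine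
Weierstrass polynomial of `W`. -/
abbrev WeierstrassCubicAlg (W : WeierstrassCurve K) : Type _ :=
  TCAlg K (-W.a₆) 0 (-1) W.a₃ (-W.a₄) 1 0 (-W.a₂) 0 W.a₁

namespace WeierstrassCubicAlg

/-- The generator `x` of the cubic algebra of a Weierstrass curve. -/
noncomputable abbrev genX (W : WeierstrassCurve K) : WeierstrassCubicAlg W :=
  tcX K (-W.a₆) 0 (-1) W.a₃ (-W.a₄) 1 0 (-W.a₂) 0 W.a₁

/-- The generator `y` of the cubic algebra of a Weierstrass curve. -/
noncomputable abbrev genY (W : WeierstrassCurve K) : WeierstrassCubicAlg W :=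
  tcY K (-W.a₆) 0 (-1) W.a₃ (-W.a₄) 1 0 (-W.a₂) 0 W.a₁

/-- The central element `ξ` of the cubic algebra of a Weierstrass curve. -/
noncomputable abbrev xi (W : WeierstrassCurve K) : WeierstrassCubicAlg W :=
  tcXi K (-W.a₆) 0 (-1) W.a₃ (-W.a₄) 1 0 (-W.a₂) 0 W.a₁

variable {W : WeierstrassCurve K}

theorem map_relations_iff {S : Type*} [Ring S] [Algebra K S] (g : FreeAlgebra K (Fin 2) →ₐ[K] S) :
    (∀ ⦃u v⦄, tcRel K (-W.a₆) 0 (-1) W.a₃ (-W.a₄) 1 0 (-W.a₂) 0 W.a₁ u v → g u = g v) ↔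
      CubicRelations W (g (FreeAlgebra.ι K 0)) (g (FreeAlgebra.ι K 1)) := by
  constructor
  · intro h
    have xxx := h ⟨rfl, .inl rfl⟩
    have xxy := h ⟨rfl, .inr (.inl rfl)⟩
    have xyy := h ⟨rfl, .inr (.inr (.inl rfl))⟩
    have yyy := h ⟨rfl, .inr (.inr (.inr rfl))⟩
    simp only [map_add, map_mul, map_pow, map_zero, AlgHom.commutes] at xxx xxy xyy yyy
    simp only [Algebra.algebraMap_eq_smul_one, smul_mul_assoc, one_mul, zero_mul] at xxx xxy xyy yyy
    constructor
    · linear_combination (norm := module) -xxx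
    · linear_combination (norm := module) -xxy
    · linear_combination (norm := module) -xyy
    · linear_combination (norm := module) -yyy
  · rintro ⟨xxx, xxy, xyy, yyy⟩ u v ⟨rfl, rfl | rfl | rfl | rfl⟩ <;>
      simp only [map_add, map_mul, map_pow, map_zero, AlgHom.commutes] <;>
      simp only [Algebra.algebraMap_eq_smul_one, smul_mul_assoc, one_mul, zero_mul]
    · linear_combination (norm := module) -xxx
    · linear_combination (norm := module) -xxy
    · linear_combination (norm := module) -xyy
    · linear_combination (norm := module) -yyy

theorem cubicRelations (W : WeierstrassCurve K) : CubicRelations W (genX W) (genY W) :=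
  (map_relations_iff (RingQuot.mkAlgHom K _)).mp fun _ _ h => RingQuot.mkAlgHom_rel K h

theorem exists_algHom {S : Type*} [Ring S] [Algebra K S] {x y : S} (h : CubicRelations W x y) :
    ∃ θ : WeierstrassCubicAlg W →ₐ[K] S, θ (genX W) = x ∧ θ (genY W) = y := by
  let g : FreeAlgebra K (Fin 2) →ₐ[K] S := FreeAlgebra.lift K ![x, y]
  have hx : g (FreeAlgebra.ι K 0) = x := by simp [g]
  have hy : g (FreeAlgebra.ι K 1) = y := by simp [g]
  have respects := (map_relations_iff (W := W) g).mpr (by rwa [hx, hy])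
  exact ⟨RingQuot.liftAlgHom K ⟨g, respects⟩,
    (RingQuot.liftAlgHom_mkAlgHom_apply K g respects _).trans hx,
    (RingQuot.liftAlgHom_mkAlgHom_apply K g respects _).trans hy⟩

theorem xi_eq_cubicXi (W : WeierstrassCurve K) : xi W = cubicXi W (genX W) (genY W) := by
  simp only [xi, tcXi, cubicXi, Algebra.algebraMap_eq_smul_one, smul_mul_assoc, one_mul, mul_add,
    mul_smul_comm, mul_one, zero_smul, zero_mul, add_zero]
  module

end WeierstrassCubicAlg

open WeierstrassCubicAlg in
theorem tc_iso_matrix_general (W : WeierstrassCurve K) :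
    ∃ θ : WeierstrassCubicAlg W ≃ₐ[K] Matrix (Fin 3) (Fin 3) (AffineRing W),
      θ (genX W) = weierstrassX W (affineX W) (affineY W) ∧
      θ (genY W) = weierstrassY _ W ∧
      θ (xi W) = !![affineX W, 0, 0; 0, affineX W, 0; 0, 0, affineX W] ∧
      ∀ D : WeierstrassCubicAlg W →ₗ[K] WeierstrassCubicAlg W,
        (∀ u v, D (u * v) = D u * v + u * D v) → D (genX W) = ⁅genX W, genX W * genY W⁆ →
        D (genY W) = ⁅genY W * genX W, genY W⁆ →
        θ (D (xi W) - algebraMap K _ W.a₁ * xi W - algebraMap K _ W.a₃) =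
          (2 : K) • !![affineY W, 0, 0; 0, affineY W, 0; 0, 0, affineY W] := by
  have hrel := cubicRelations W
  obtain ⟨θ, hθx, hθy⟩ := exists_algHom (cubicRelations_weierstrass (isWeierstrassPair_affine W))
  have hbij := hrel.bijective_algHom adjoin_tcX_tcY_eq_top hθx hθy
  have hθξ : θ (xi W) = !![affineX W, 0, 0; 0, affineX W, 0; 0, 0, affineX W] := by
    rw [xi_eq_cubicXi, map_cubicXi, hθx, hθy, cubicXi_weierstrass]
  refine ⟨.ofBijective θ hbij, hθx, hθy, hθξ, fun D leibniz hDx hDy => ?_⟩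
  have hθDξ : θ (D (xi W)) = (2 : K) • !![affineY W, 0, 0; 0, affineY W, 0; 0, 0, affineY W]
      + W.a₁ • θ (xi W) + W.a₃ • 1 := by
    rw [hθξ, xi_eq_cubicXi, leibniz_cubicXi hrel.yyy leibniz hDx hDy, map_cubicXiDeriv, hθx, hθy,
      cubicXiDeriv_weierstrass]
  rw [AlgEquiv.ofBijective_apply, map_sub, map_sub, map_mul, AlgHom.commutes, AlgHom.commutes,
    hθDξ, ← Algebra.smul_def, Algebra.algebraMap_eq_smul_one]
  abel

end TernaryCubicAlgebra

set_option maxHeartbeats 1000000 in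
set_option synthInstance.maxHeartbeats 400000 in
open MvPolynomial in
/-- Let `F(x,y) = y² + a₁xy + a₃y − (x³+a₂x²+a₄x+a₆)` and let `f(x,y,z) = x³F(z/x, y/x)`
be the associated ternary cubic, i.e. the ternary cubic with coefficient vector
`(A,B,C,A₂,A₃,B₁,B₃,C₁,C₂,M) = (−a₆, 0, −1, a₃, −a₄, 1, 0, −a₂, 0, a₁)`.  There is a
`K`-algebra isomorphism `θ : A_f → Mat₃(K[x,y]/(F))` given by the displayed matrices,
with `θ(ξ) = x₀I₃` and `θ(η) = y₀I₃` (where `η = ½(Dξ − a₁ξ − a₃)` for the derivation `D`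
with `Dx = C[xy,x]`, `Dy = C[y,yx]`). -/
theorem tc_iso_matrix (K : Type*) [Field K] (h2 : (2 : K) ≠ 0) (h3 : (3 : K) ≠ 0)
    (a₁ a₂ a₃ a₄ a₆ : K) :
    letI F : MvPolynomial (Fin 2) K :=
      (X 1) ^ 2 + C a₁ * (X 0) * (X 1) + C a₃ * (X 1)
        - ((X 0) ^ 3 + C a₂ * (X 0) ^ 2 + C a₄ * (X 0) + C a₆)
    letI R := MvPolynomial (Fin 2) K ⧸ Ideal.span {F}
    letI x₀ : R := Ideal.Quotient.mk _ (X 0)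
    letI y₀ : R := Ideal.Quotient.mk _ (X 1)
    letI α : K → R := algebraMap K _
    letI x := tcX K (-a₆) 0 (-1) a₃ (-a₄) 1 0 (-a₂) 0 a₁
    letI y := tcY K (-a₆) 0 (-1) a₃ (-a₄) 1 0 (-a₂) 0 a₁
    letI ξ := tcXi K (-a₆) 0 (-1) a₃ (-a₄) 1 0 (-a₂) 0 a₁
    ∃ θ : TCAlg K (-a₆) 0 (-1) a₃ (-a₄) 1 0 (-a₂) 0 a₁ ≃ₐ[K] Matrix (Fin 3) (Fin 3) R,
      θ x = !![-x₀ - α a₂, -1, 0;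
               x₀ ^ 2 + α a₂ * x₀ + α a₄, 0, y₀;
               y₀ + α a₁ * x₀ + α a₃, 0, x₀] ∧
      θ y = !![0, 0, 0; -(α a₁), 0, -1; 1, 0, 0] ∧
      θ ξ = !![x₀, 0, 0; 0, x₀, 0; 0, 0, x₀] ∧
      ∀ D : TCAlg K (-a₆) 0 (-1) a₃ (-a₄) 1 0 (-a₂) 0 a₁ →ₗ[K]
            TCAlg K (-a₆) 0 (-1) a₃ (-a₄) 1 0 (-a₂) 0 a₁,
        (∀ u v, D (u * v) = D u * v + u * D v) →
        D x = algebraMap K _ (-1 : K) * ((x * y) * x - x * (x * y)) →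
        D y = algebraMap K _ (-1 : K) * (y * (y * x) - (y * x) * y) →
        θ ((2 : K)⁻¹ • (D ξ - algebraMap K _ a₁ * ξ - algebraMap K _ a₃))
          = !![y₀, 0, 0; 0, y₀, 0; 0, 0, y₀] := by
  obtain ⟨θ, hx, hy, hξ, hD⟩ := tc_iso_matrix_general ⟨a₁, a₂, a₃, a₄, a₆⟩
  refine ⟨θ, hx, hy, hξ, fun D leibniz hDx hDy => ?_⟩
  have hη := hD D leibniz (by simpa [Ring.lie_def] using hDx) (by simpa [Ring.lie_def] using hDy)
  exact (map_smul θ _ _).trans <| (congrArg _ hη).trans <| inv_smul_smul₀ h2 _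
end

section
/- Let L/K be cyclic of degree n with Galois group generated by σ. The map K^×/N_{L/K}(L^×) → Br(L/K) sending the class of b to the class of the cyclic algebra (L/K,b) is a group isomorphism onto the relative Brauer group Br(L/K). -/
open TensorProduct

/-- The relations presenting the cyclic algebra `(L/K, b)` attached to a cyclic extension
`L/K` with `Gal(L/K) = ⟨σ⟩` of order `n` and `b ∈ K^×`: the free `K`-algebra on the
elements of `L` (generators `Sum.inl x`) and one generator `v = Sum.inr ()`, modulo the
relations making `L → A` a `K`-algebra map together with `vⁿ = b` and `vλ = σ(λ)v`. -/
def cycRel (K L : Type*) [Field K] [Field L] [Algebra K L] (σ : L ≃ₐ[K] L) (n : ℕ)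
    (b : K) : FreeAlgebra K (L ⊕ Unit) → FreeAlgebra K (L ⊕ Unit) → Prop := fun u w =>
  letI ι : L ⊕ Unit → FreeAlgebra K (L ⊕ Unit) := FreeAlgebra.ι K
  (∃ x y : L, u = ι (Sum.inl (x + y)) ∧ w = ι (Sum.inl x) + ι (Sum.inl y)) ∨
  (∃ x y : L, u = ι (Sum.inl (x * y)) ∧ w = ι (Sum.inl x) * ι (Sum.inl y)) ∨
  (∃ k : K, u = ι (Sum.inl (algebraMap K L k)) ∧ w = algebraMap K _ k) ∨
  (u = ι (Sum.inr ()) ^ n ∧ w = algebraMap K _ b) ∨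
  (∃ x : L, u = ι (Sum.inr ()) * ι (Sum.inl x) ∧ w = ι (Sum.inl (σ x)) * ι (Sum.inr ()))

/-- The cyclic algebra `(L/K, b)`, presented by generators and relations. -/
def CyclicAlg (K L : Type*) [Field K] [Field L] [Algebra K L] (σ : L ≃ₐ[K] L) (n : ℕ)
    (b : K) := RingQuot (cycRel K L σ n b)

noncomputable instance (K L : Type*) [Field K] [Field L] [Algebra K L] (σ : L ≃ₐ[K] L)
    (n : ℕ) (b : K) : Ring (CyclicAlg K L σ n b) := inferInstanceAs (Ring (RingQuot _))

noncomputable instance (K L : Type*) [Field K] [Field L] [Algebra K L] (σ : L ≃ₐ[K] L)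
    (n : ℕ) (b : K) : Algebra K (CyclicAlg K L σ n b) :=
  inferInstanceAs (Algebra K (RingQuot _))

/-- The canonical map `L → (L/K, b)`. -/
noncomputable def cycI (K L : Type*) [Field K] [Field L] [Algebra K L] (σ : L ≃ₐ[K] L)
    (n : ℕ) (b : K) (x : L) : CyclicAlg K L σ n b :=
  RingQuot.mkAlgHom K _ (FreeAlgebra.ι K (Sum.inl x))

/-- The element `v` of the cyclic algebra `(L/K, b)`. -/
noncomputable def cycV (K L : Type*) [Field K] [Field L] [Algebra K L] (σ : L ≃ₐ[K] L)
    (n : ℕ) (b : K) : CyclicAlg K L σ n b :=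
  RingQuot.mkAlgHom K _ (FreeAlgebra.ι K (Sum.inr ()))

/-- Brauer equivalence of two `K`-algebras: some matrix amplifications are isomorphic. -/
def BrauerEquiv (K : Type*) [Field K] (A B : Type*) [Ring A] [Algebra K A] [Ring B]
    [Algebra K B] : Prop :=
  ∃ m k : ℕ, 0 < m ∧ 0 < k ∧
    Nonempty (Matrix (Fin m) (Fin m) A ≃ₐ[K] Matrix (Fin k) (Fin k) B)

universe u

/-!
Let `A` be a `K`-algebra which becomes the matrix algebra `M_ι(L)` over `L`. The action of `σ` on
`L` extends to a semilinear automorphism of `M_ι(L)` fixing `A`; by Skolem–Noether it is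
conjugation by a `σ`-semilinear operator `P ∘ σ` of `L^ι`. The `n`-th power of this operator is
`L`-linear and commutes with `A` and with `P ∘ σ`, so it is a scalar `b⁻¹` with `b ∈ K^×`. Since `P`
is unique up to a factor `x ∈ L^×`, which multiplies `b⁻¹` by `N(x)`, the class of `b` in
`K^×/N(L^×)` is an invariant of `A`.

The regular representation shows that `(L/K, b)` has invariant `b`. Conversely, if `A` has invariant
`b`, then in `M_ι((L/K, bc))` the scalar matrices `L` and the element `P v` satisfy the relations of
`(L/K, c)` and commute with `A`, so that `A ⊗ (L/K, c) ≅ M_ι((L/K, bc))`. For `A = (L/K, b)` this is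
multiplicativity, and for `c = 1`, where `(L/K, 1) ≅ End_K(L)`, it says that `A` is equivalent
to `(L/K, b)`.
-/

namespace CyclicAlg

section Presentation

variable {K L : Type*} [Field K] [Field L] [Algebra K L] (σ : L ≃ₐ[K] L) (n : ℕ) (b : K)

theorem mkAlgHom_eq_of_cycRel {u w : FreeAlgebra K (L ⊕ Unit)} (h : cycRel K L σ n b u w) :
    RingQuot.mkAlgHom K (cycRel K L σ n b) u = RingQuot.mkAlgHom K (cycRel K L σ n b) w :=
  RingQuot.mkAlgHom_rel K h

/-- The canonical map `cycI : L → (L/K, b)` as an algebra homomorphism. -/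
noncomputable def incl : L →ₐ[K] CyclicAlg K L σ n b :=
  have map_algebraMap (k : K) : cycI K L σ n b (algebraMap K L k) = algebraMap K _ k :=
    (mkAlgHom_eq_of_cycRel σ n b (Or.inr (Or.inr (Or.inl ⟨k, rfl, rfl⟩)))).trans
      (AlgHom.commutes _ _)
  { toFun := cycI K L σ n b
    map_one' := by simpa using map_algebraMap 1
    map_mul' := fun x y =>
      (mkAlgHom_eq_of_cycRel σ n b (Or.inr (Or.inl ⟨x, y, rfl, rfl⟩))).trans (map_mul _ _ _)
    map_zero' := by simpa using map_algebraMap 0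
    map_add' := fun x y =>
      (mkAlgHom_eq_of_cycRel σ n b (Or.inl ⟨x, y, rfl, rfl⟩)).trans (map_add _ _ _)
    commutes' := map_algebraMap }

theorem cycV_pow : cycV K L σ n b ^ n = algebraMap K _ b :=
  ((map_pow _ _ _).symm.trans
    (mkAlgHom_eq_of_cycRel σ n b (Or.inr (Or.inr (Or.inr (Or.inl ⟨rfl, rfl⟩)))))).trans
      (AlgHom.commutes _ _)

theorem cycV_mul_incl (x : L) :
    cycV K L σ n b * incl σ n b x = incl σ n b (σ x) * cycV K L σ n b :=
  ((map_mul _ _ _).symm.trans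
    (mkAlgHom_eq_of_cycRel σ n b (Or.inr (Or.inr (Or.inr (Or.inr ⟨x, rfl, rfl⟩)))))).trans
      (map_mul _ _ _)

section lift

variable {σ n b} {B : Type*} [Ring B] [Algebra K B] (f : L →ₐ[K] B) (w : B)
    (hw : w ^ n = algebraMap K B b) (hf : ∀ x, w * f x = f (σ x) * w)

/-- The universal property of the cyclic algebra. -/
noncomputable def lift : CyclicAlg K L σ n b →ₐ[K] B :=
  RingQuot.liftAlgHom K ⟨FreeAlgebra.lift K (Sum.elim f fun _ => w), by
    rintro _ _
      (⟨x, y, rfl, rfl⟩ | ⟨x, y, rfl, rfl⟩ | ⟨k, rfl, rfl⟩ | ⟨rfl, rfl⟩ | ⟨x, rfl, rfl⟩) <;>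
      simp [hw, hf]⟩

@[simp]
theorem lift_incl (x : L) : lift f w hw hf (incl σ n b x) = f x :=
  (RingQuot.liftAlgHom_mkAlgHom_apply ..).trans (by simp)

@[simp]
theorem lift_cycV : lift f w hw hf (cycV K L σ n b) = w :=
  (RingQuot.liftAlgHom_mkAlgHom_apply ..).trans (by simp)

end lift

@[elab_as_elim]
theorem induction_on {motive : CyclicAlg K L σ n b → Prop} (y : CyclicAlg K L σ n b)
    (incl : ∀ x, motive (incl σ n b x)) (cycV : motive (cycV K L σ n b))
    (mul : ∀ x y, motive x → motive y → motive (x * y))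
    (add : ∀ x y, motive x → motive y → motive (x + y)) : motive y := by
  obtain ⟨y, rfl⟩ := RingQuot.mkAlgHom_surjective K (cycRel K L σ n b) y
  induction y using FreeAlgebra.induction with
  | grade0 k =>
    have hk : RingQuot.mkAlgHom K (cycRel K L σ n b) (algebraMap K _ k) =
        CyclicAlg.incl σ n b (algebraMap K L k) :=
      (AlgHom.commutes _ _).trans (AlgHom.commutes _ _).symm
    exact hk ▸ incl _
  | grade1 x => rcases x with x | ⟨⟩; exacts [incl x, cycV]
  | mul x y hx hy => rw [map_mul]; exact mul _ _ hx hy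
  | add x y hx hy => rw [map_add]; exact add _ _ hx hy

/-- The parametrization of the cyclic algebra by coefficients with respect to `1, v, …, vⁿ⁻¹`. -/
noncomputable def ofCoeff : (Fin n → L) →ₗ[K] CyclicAlg K L σ n b :=
  ∑ i : Fin n, (LinearMap.mulRight K (cycV K L σ n b ^ (i : ℕ))).comp
    ((incl σ n b).toLinearMap.comp (LinearMap.proj i))

theorem ofCoeff_apply (r : Fin n → L) :
    ofCoeff σ n b r = ∑ i, incl σ n b (r i) * cycV K L σ n b ^ (i : ℕ) := by
  simp [ofCoeff]

variable {n}

theorem incl_mul_cycV_pow_mem_range_ofCoeff (hn : 0 < n) (x : L) (k : ℕ) :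
    incl σ n b x * cycV K L σ n b ^ k ∈ LinearMap.range (ofCoeff σ n b) := by
  have hk : cycV K L σ n b ^ k = incl σ n b (algebraMap K L (b ^ (k / n))) *
      cycV K L σ n b ^ (k % n) := by
    conv_lhs => rw [← Nat.div_add_mod k n, pow_add, pow_mul, cycV_pow]
    rw [AlgHom.commutes, map_pow]
  refine ⟨Pi.single ⟨k % n, Nat.mod_lt _ hn⟩ (x * algebraMap K L (b ^ (k / n))), ?_⟩
  rw [ofCoeff_apply, Finset.sum_eq_single ⟨k % n, Nat.mod_lt _ hn⟩, hk, ← mul_assoc, ← map_mul,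
    Pi.single_eq_same]
  · intro i _ hi
    simp [Pi.single_eq_of_ne hi]
  · simp

theorem ofCoeff_surjective (hn : 0 < n) : Function.Surjective (ofCoeff σ n b) := by
  have mem := incl_mul_cycV_pow_mem_range_ofCoeff σ b hn
  suffices h : ∀ y, ∀ z ∈ LinearMap.range (ofCoeff σ n b),
      y * z ∈ LinearMap.range (ofCoeff σ n b) by
    intro y
    simpa using h y 1 (by simpa using mem 1 0)
  intro y
  induction y using induction_on with
  | incl x =>
    rintro _ ⟨r, rfl⟩
    rw [ofCoeff_apply, Finset.mul_sum]
    refine sum_mem fun i _ => ?_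
    simpa only [map_mul, mul_assoc] using mem (x * r i) i
  | cycV =>
    rintro _ ⟨r, rfl⟩
    rw [ofCoeff_apply, Finset.mul_sum]
    refine sum_mem fun i _ => ?_
    simpa only [← mul_assoc, cycV_mul_incl, pow_succ'] using mem (σ (r i)) (i + 1)
  | mul x y hx hy => intro z hz; rw [mul_assoc]; exact hx _ (hy _ hz)
  | add x y hx hy => intro z hz; rw [add_mul]; exact add_mem (hx _ hz) (hy _ hz)

variable [FiniteDimensional K L]

theorem finite (hn : 0 < n) : Module.Finite K (CyclicAlg K L σ n b) :=
  Module.Finite.of_surjective _ (ofCoeff_surjective σ b hn)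

theorem finrank_le (hn : 0 < n) :
    Module.finrank K (CyclicAlg K L σ n b) ≤ n * Module.finrank K L := by
  simpa [Module.finrank_pi_fintype] using
    (ofCoeff σ n b).finrank_le_finrank_of_surjective (ofCoeff_surjective σ b hn)

end Presentation

end CyclicAlg

section EntrywiseAction

variable {G R ι : Type*} [Monoid G] [Semiring R] [MulSemiringAction G R]

theorem smul_smul_matrix (g : G) (c : R) (X : Matrix ι ι R) :
    g • c • X = (g • c) • g • X := by
  ext i j
  exact smul_mul' g c (X i j)

variable [Fintype ι] [DecidableEq ι]

/-- The entrywise action on square matrices, as an action by ring homomorphisms. -/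
instance matrixMulSemiringAction : MulSemiringAction G (Matrix ι ι R) where
  smul_one g := by ext i j; simp [Matrix.one_apply, apply_ite (g • ·)]
  smul_mul g X Y := by ext i j; simp [Matrix.mul_apply, Finset.smul_sum]

theorem smul_algebraMap_matrix {R : Type*} [CommSemiring R] [MulSemiringAction G R] (g : G)
    (c : R) : g • algebraMap R (Matrix ι ι R) c = algebraMap R _ (g • c) := by
  rw [Algebra.algebraMap_eq_smul_one, smul_smul_matrix, smul_one, Algebra.algebraMap_eq_smul_one]

end EntrywiseAction

/-- The twisted power `x · gx · g²x ⋯ gᵏ⁻¹x`, that is, the left component of `(x, g)ᵏ` in the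
semidirect product `M ⋊ G`. -/
def twistPow {G M : Type*} [Monoid G] [Monoid M] [MulDistribMulAction G M] (g : G) (x : M) :
    ℕ → M
  | 0 => 1
  | k + 1 => x * g • twistPow g x k

section twistPow

variable {G M : Type*} [Monoid G] [Monoid M] [MulDistribMulAction G M] {g : G}

theorem twistPow_eq_pow {x : M} (hx : g • x = x) (k : ℕ) : twistPow g x k = x ^ k := by
  induction k with
  | zero => simp [twistPow]
  | succ k ih => rw [twistPow, ih, smul_pow', hx, pow_succ']

variable (g)

theorem twistPow_succ_right (x : M) (k : ℕ) :
    twistPow g x (k + 1) = twistPow g x k * g ^ k • x := by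
  induction k with
  | zero => simp [twistPow]
  | succ k ih =>
    calc twistPow g x (k + 1 + 1) = x * g • (twistPow g x k * g ^ k • x) := by rw [← ih]; rfl
      _ = twistPow g x (k + 1) * g ^ (k + 1) • x := by
        rw [smul_mul', ← mul_assoc, smul_smul, ← pow_succ']; rfl

theorem isUnit_twistPow {x : M} (hx : IsUnit x) (k : ℕ) : IsUnit (twistPow g x k) := by
  induction k with
  | zero => exact isUnit_one
  | succ k ih => exact hx.mul (ih.map (MulDistribMulAction.toMonoidHom M g))

theorem twistPow_eq_prod {M : Type*} [CommMonoid M] [MulDistribMulAction G M] (x : M) (k : ℕ) :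
    twistPow g x k = ∏ i ∈ Finset.range k, g ^ i • x := by
  induction k with
  | zero => simp [twistPow]
  | succ k ih => rw [twistPow_succ_right, ih, Finset.prod_range_succ]

theorem map_twistPow {N : Type*} [Monoid N] [MulDistribMulAction G N] (φ : M →* N)
    (hφ : ∀ x, φ (g • x) = g • φ x) (x : M) (k : ℕ) :
    φ (twistPow g x k) = twistPow g (φ x) k := by
  induction k with
  | zero => simp [twistPow]
  | succ k ih => rw [twistPow, map_mul, hφ, ih, twistPow]

theorem twistPow_mul_smul_eq {x y q : M} (h : x * g • q = q * y) (k : ℕ) :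
    twistPow g x k * g ^ k • q = q * twistPow g y k := by
  induction k with
  | zero => simp [twistPow]
  | succ k ih =>
    rw [twistPow, pow_succ', mul_smul, mul_assoc, ← smul_mul', ih, smul_mul', ← mul_assoc, h,
      mul_assoc, twistPow]

theorem twistPow_smul {R : Type*} [Monoid R] [MulDistribMulAction G R] [MulAction R M]
    [IsScalarTower R M M] [SMulCommClass R M M]
    (hg : ∀ (c : R) (x : M), g • c • x = (g • c) • g • x) (c : R) (x : M) (k : ℕ) :
    twistPow g (c • x) k = twistPow g c k • twistPow g x k := by
  induction k with
  | zero => simp [twistPow]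
  | succ k ih => simp only [twistPow, ih, hg, smul_mul_smul_comm]

theorem map_mul_pow_eq_map_twistPow_mul {N : Type*} [Monoid N] (φ : M →* N) {w : N}
    (hw : ∀ x, w * φ x = φ (g • x) * w) (x : M) (k : ℕ) :
    (φ x * w) ^ k = φ (twistPow g x k) * w ^ k := by
  induction k with
  | zero => simp [twistPow]
  | succ k ih =>
    rw [pow_succ', ih, twistPow, map_mul, pow_succ', mul_assoc, ← mul_assoc w, hw]
    simp only [mul_assoc]

end twistPow

section CyclicGalois

theorem prod_range_card_mul_pow {G M : Type*} [Group G] [Fintype G] [CommMonoid M] {g : G}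
    (hg : ∀ x, x ∈ Subgroup.zpowers g) (f : G → M) (x : G) :
    ∏ i ∈ Finset.range (Nat.card G), f (x * g ^ i) = ∏ y, f y := by
  classical
  have injOn : Set.InjOn (g ^ ·) (Finset.range (Nat.card G) : Set ℕ) := by
    rw [Finset.coe_range, ← orderOf_eq_card_of_forall_mem_zpowers hg]
    exact pow_injOn_Iio_orderOf
  calc ∏ i ∈ Finset.range (Nat.card G), f (x * g ^ i) = ∏ y, f (x * y) := by
        rw [← IsCyclic.image_range_card hg, Finset.prod_image injOn]
    _ = ∏ y, f y := Equiv.prod_comp (Equiv.mulLeft x) f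

variable {K L : Type*} [Field K] [Field L] [Algebra K L]

variable (K L) in
/-- The `K`-algebra homomorphism `x ↦ (τ x)_τ` listing the Galois conjugates of `x`. -/
def conjugates : L →ₐ[K] (L ≃ₐ[K] L) → L :=
  AlgHom.pi fun τ => τ.toAlgHom

@[simp]
theorem conjugates_apply (x : L) (τ : L ≃ₐ[K] L) : conjugates K L x τ = τ x := rfl

variable [FiniteDimensional K L]

theorem span_range_conjugates_eq_top : Submodule.span L (Set.range (conjugates K L)) = ⊤ :=
  span_flip_eq_top_iff_linearIndependent.2 <| (linearIndependent_monoidHom L L).comp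
    (fun τ : L ≃ₐ[K] L => (τ : L →* L)) fun _ _ h =>
      AlgEquiv.ext fun x => DFunLike.congr_fun (F := L →* L) h x

variable [IsGalois K L]

theorem algEquiv_pow_finrank (σ : L ≃ₐ[K] L) : σ ^ Module.finrank K L = 1 := by
  rw [← IsGalois.card_aut_eq_finrank, pow_card_eq_one']

theorem span_range_automorphisms_eq_top :
    Submodule.span L (Set.range fun τ : L ≃ₐ[K] L => τ.toAlgHom.toLinearMap) = ⊤ := by
  have linearIndependent : LinearIndependent L fun τ : L ≃ₐ[K] L => τ.toAlgHom.toLinearMap :=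
    (linearIndependent_toLinearMap K L L).comp _ AlgEquiv.coe_toAlgHom_injective
  refine linearIndependent.span_eq_top_of_card_eq_finrank' ?_
  rw [← Nat.card_eq_fintype_card, IsGalois.card_aut_eq_finrank, Module.finrank_linearMap_self]

variable {σ : L ≃ₐ[K] L} (hσ : ∀ τ : L ≃ₐ[K] L, τ ∈ Subgroup.zpowers σ)

include hσ

theorem exists_algebraMap_eq_of_generator_apply_eq {x : L} (hx : σ x = x) :
    ∃ k : K, x = algebraMap K L k := by
  suffices x ∈ Set.range (algebraMap K L) from this.imp fun _ => Eq.symm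
  refine (IsGalois.mem_range_algebraMap_iff_fixed x).2 fun τ => ?_
  have : σ ∈ MulAction.stabilizer (L ≃ₐ[K] L) x := hx
  exact (Subgroup.zpowers_le.2 this) (hσ τ)

theorem twistPow_finrank_eq_norm (x : L) :
    twistPow σ x (Module.finrank K L) = algebraMap K L (Algebra.norm K x) := by
  rw [twistPow_eq_prod, Algebra.norm_eq_prod_automorphisms, ← IsGalois.card_aut_eq_finrank]
  simpa using prod_range_card_mul_pow hσ (fun τ : L ≃ₐ[K] L => τ x) 1

end CyclicGalois

section BaseChange

theorem isBaseChange_of_span_range_eq_top {K L V W : Type*} [Field K] [Field L] [Algebra K L]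
    [AddCommGroup V] [Module K V] [Module.Finite K V] [AddCommGroup W] [Module K W] [Module L W]
    [IsScalarTower K L W] {f : V →ₗ[K] W} (hf : Submodule.span L (Set.range f) = ⊤)
    (hrank : Module.finrank K V ≤ Module.finrank L W) : IsBaseChange L f := by
  let φ : L ⊗[K] V →ₗ[L] W := (TensorProduct.isBaseChange K V L).lift f
  have φ_one_tmul (v : V) : φ (1 ⊗ₜ v) = f v := (TensorProduct.isBaseChange K V L).lift_eq f v
  have surjective : Function.Surjective φ := by
    rw [← LinearMap.range_eq_top, eq_top_iff, ← hf, Submodule.span_le]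
    rintro _ ⟨v, rfl⟩
    exact ⟨1 ⊗ₜ v, φ_one_tmul v⟩
  have : Module.Finite L W := Module.Finite.of_surjective φ surjective
  have finrank_eq : Module.finrank L (L ⊗[K] V) = Module.finrank L W :=
    (Module.finrank_baseChange.trans_le hrank).antisymm
      (φ.finrank_le_finrank_of_surjective surjective)
  exact .of_equiv (LinearEquiv.ofBijective φ
    ⟨(LinearMap.injective_iff_surjective_of_finrank_eq_finrank finrank_eq).2 surjective,
      surjective⟩) φ_one_tmul

variable {R S A B C : Type*} [CommRing R] [CommRing S] [Algebra R S] [Ring A] [Algebra R A]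
  [Ring B] [Algebra R B] [Algebra S B] [IsScalarTower R S B] [Ring C] [Algebra R C] [Algebra S C]
  [IsScalarTower R S C] {f : A →ₐ[R] B}

/-- The extension of an algebra homomorphism along a base change of algebras. -/
noncomputable def liftAlgHomOfIsBaseChange (hf : IsBaseChange S f.toLinearMap) (g : A →ₐ[R] C) :
    B →ₐ[S] C :=
  .ofLinearMap (hf.lift g.toLinearMap) (by simpa using hf.lift_eq g.toLinearMap 1) fun x y => by
    induction x using hf.inductionOn with
    | zero => simp
    | smul c x hx => rw [smul_mul_assoc, map_smul, map_smul, hx, smul_mul_assoc]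
    | add x x' hx hx' => rw [add_mul, map_add, map_add, hx, hx', add_mul]
    | tmul a =>
      induction y using hf.inductionOn with
      | zero => simp
      | smul c y hy => rw [mul_smul_comm, map_smul, map_smul, hy, mul_smul_comm]
      | add y y' hy hy' => rw [mul_add, map_add, map_add, hy, hy', mul_add]
      | tmul a' =>
        rw [hf.lift_eq, hf.lift_eq]
        simpa using hf.lift_eq g.toLinearMap (a * a')

theorem liftAlgHomOfIsBaseChange_apply (hf : IsBaseChange S f.toLinearMap) (g : A →ₐ[R] C)
    (a : A) : liftAlgHomOfIsBaseChange hf g (f a) = g a :=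
  hf.lift_eq g.toLinearMap a

theorem exists_algebraMap_eq_of_commute [Algebra.IsCentral S B]
    (hf : IsBaseChange S f.toLinearMap) {x : B} (hx : ∀ a, Commute x (f a)) :
    ∃ c : S, x = algebraMap S B c := by
  refine (Algebra.IsCentral.mem_center_iff S).1 (Subalgebra.mem_center_iff.2 fun y => ?_)
  exact (LinearMap.congr_fun (hf.algHom_ext (LinearMap.mulLeft S x) (LinearMap.mulRight S x) hx)
    y).symm

end BaseChange

section SkolemNoether

variable {K L ι A : Type*} [Field K] [Field L] [Algebra K L] [Fintype ι] [DecidableEq ι]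
  [Ring A] [Algebra K A]

theorem exists_conj_of_algEquiv_matrix (e : Matrix ι ι L ≃ₐ[L] Matrix ι ι L) :
    ∃ Q : Matrix ι ι L, IsUnit Q ∧ ∀ X, Q * X = e X * Q := by
  obtain ⟨T, hT⟩ := (Matrix.toLinAlgEquiv'.symm.trans
    (e.trans Matrix.toLinAlgEquiv')).eq_linearEquivConjAlgEquiv
  refine ⟨Matrix.toLinAlgEquiv'.symm T.toLinearMap, ?_, fun X => ?_⟩
  · rw [isUnit_map_iff, Module.End.isUnit_iff]
    exact T.bijective
  · have := congr($hT (Matrix.toLinAlgEquiv' X))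
    apply Matrix.toLinAlgEquiv'.injective
    simp only [AlgEquiv.trans_apply, AlgEquiv.symm_apply_apply] at this
    rw [map_mul, map_mul, AlgEquiv.apply_symm_apply, this]
    ext; simp [LinearEquiv.conjAlgEquiv_apply]

theorem exists_conj_of_isBaseChange [Nonempty ι] {j₁ : A →ₐ[K] Matrix ι ι L}
    (hj : IsBaseChange L j₁.toLinearMap) (j₂ : A →ₐ[K] Matrix ι ι L) :
    ∃ Q : Matrix ι ι L, IsUnit Q ∧ ∀ a, Q * j₁ a = j₂ a * Q := by
  let φ := liftAlgHomOfIsBaseChange hj j₂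
  have injective : Function.Injective φ := RingHom.injective φ.toRingHom
  have surjective : Function.Surjective φ :=
    (LinearMap.injective_iff_surjective (f := φ.toLinearMap)).1 injective
  obtain ⟨Q, hQ, h⟩ :=
    exists_conj_of_algEquiv_matrix (AlgEquiv.ofBijective φ ⟨injective, surjective⟩)
  refine ⟨Q, hQ, fun a => ?_⟩
  rw [← liftAlgHomOfIsBaseChange_apply hj j₂]
  exact h (j₁ a)

end SkolemNoether

section BrauerEquiv

variable {K ι κ A B : Type*} [Field K] [Ring A] [Algebra K A] [Ring B] [Algebra K B] [Fintype ι]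
  [DecidableEq ι] [Nonempty ι] [Fintype κ] [DecidableEq κ] [Nonempty κ]

theorem brauerEquiv_of_algEquiv_matrix_matrix (e : Matrix ι ι A ≃ₐ[K] Matrix κ κ B) :
    BrauerEquiv K A B :=
  ⟨Fintype.card ι, Fintype.card κ, Fintype.card_pos, Fintype.card_pos,
    ⟨(Matrix.reindexAlgEquiv K A (Fintype.equivFin ι).symm).trans
      (e.trans (Matrix.reindexAlgEquiv K B (Fintype.equivFin κ)))⟩⟩

theorem brauerEquiv_of_algEquiv_matrix (e : A ≃ₐ[K] Matrix ι ι B) : BrauerEquiv K A B :=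
  brauerEquiv_of_algEquiv_matrix_matrix
    (e.mapMatrix.trans (Matrix.compAlgEquiv (Fin 1) ι B K))

end BrauerEquiv

/-- A splitting of the `K`-algebra `A` by the cyclic extension `L` with invariant `b`: a map
`j : A → M_ι(L)` which becomes an isomorphism over `L`, together with `P ∈ GL_ι(L)` such that the
`σ`-semilinear operator `P ∘ σ` of `L^ι` commutes with `j A` and has `[L : K]`-th power `b⁻¹`. -/
structure IsCyclicSplitting {K L ι A : Type*} [Field K] [Field L] [Algebra K L] [Fintype ι]
    [DecidableEq ι] [Ring A] [Algebra K A] (σ : L ≃ₐ[K] L) (j : A →ₐ[K] Matrix ι ι L)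
    (P : Matrix ι ι L) (b : K) : Prop where
  isBaseChange : IsBaseChange L j.toLinearMap
  isUnit : IsUnit P
  mul_smul_eq : ∀ a, P * σ • j a = j a * P
  twistPow_eq : twistPow σ P (Module.finrank K L) = algebraMap K (Matrix ι ι L) b⁻¹

namespace IsCyclicSplitting

variable {K L ι A : Type*} [Field K] [Field L] [Algebra K L] [Fintype ι] [DecidableEq ι]
  [Ring A] [Algebra K A] {σ : L ≃ₐ[K] L} {j : A →ₐ[K] Matrix ι ι L} {P : Matrix ι ι L} {b : K}

theorem finrank_eq (h : IsCyclicSplitting σ j P b) :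
    Module.finrank K A = Fintype.card ι ^ 2 := by
  simpa [Module.finrank_matrix, Module.finrank_baseChange, sq] using
    h.isBaseChange.equiv.finrank_eq

theorem finite [Nonempty ι] (h : IsCyclicSplitting σ j P b) : Module.Finite K A :=
  Module.finite_of_finrank_pos (h.finrank_eq ▸ pow_pos Fintype.card_pos 2)

theorem ne_zero [Nonempty ι] (h : IsCyclicSplitting σ j P b) : b ≠ 0 := by
  rintro rfl
  have := isUnit_twistPow σ h.isUnit (Module.finrank K L)
  rw [h.twistPow_eq, inv_zero, map_zero] at this
  exact not_isUnit_zero this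

theorem comp_algEquiv {B : Type*} [Ring B] [Algebra K B] (h : IsCyclicSplitting σ j P b)
    (e : B ≃ₐ[K] A) : IsCyclicSplitting σ (j.comp e.toAlgHom) P b where
  isBaseChange := h.isBaseChange.comp_equiv e.toLinearEquiv
  isUnit := h.isUnit
  mul_smul_eq a := h.mul_smul_eq (e a)
  twistPow_eq := h.twistPow_eq

theorem matrix (κ : Type*) [Fintype κ] [DecidableEq κ] (h : IsCyclicSplitting σ j P b) :
    IsCyclicSplitting σ ((Matrix.compAlgEquiv κ ι L K).toAlgHom.comp j.mapMatrix)
      ((Matrix.compAlgEquiv κ ι L K).toAlgHom.comp (Matrix.scalarAlgHom κ K) P) b where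
  isBaseChange := by
    have entrywise := (h.isBaseChange.finitePow κ).finitePow κ
    exact .of_equiv (entrywise.equiv.trans (Matrix.compAlgEquiv κ ι L L).toLinearEquiv) fun a =>
      congr_arg (Matrix.compAlgEquiv κ ι L L) ((entrywise.equiv_tmul 1 a).trans (one_smul L _))
  isUnit := h.isUnit.map _
  mul_smul_eq a := by
    have blockwise : Matrix.scalar κ P * a.map (fun x => σ • j x) =
        a.map j * Matrix.scalar κ P := by
      ext1 r s
      simpa [Matrix.diagonal_mul, Matrix.mul_diagonal] using h.mul_smul_eq (a r s)
    exact (map_mul (Matrix.compAlgEquiv κ ι L K) _ _).symm.trans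
      ((congr_arg _ blockwise).trans (map_mul _ _ _))
  twistPow_eq := by
    rw [← AlgHom.commutes ((Matrix.compAlgEquiv κ ι L K).toAlgHom.comp (Matrix.scalarAlgHom κ K)),
      ← h.twistPow_eq]
    refine (map_twistPow σ ((Matrix.compAlgEquiv κ ι L K).toAlgHom.comp
      (Matrix.scalarAlgHom κ K) : Matrix ι ι L →* Matrix (κ × ι) (κ × ι) L) (fun X => ?_) P _).symm
    ext ⟨r, i⟩ ⟨s, k⟩
    by_cases hrs : r = s <;> simp [hrs]

theorem conj [FiniteDimensional K L] [IsGalois K L] {j₀ : A →ₐ[K] Matrix ι ι L}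
    (hj₀ : IsBaseChange L j₀.toLinearMap)
    (h : IsCyclicSplitting σ j P b) (Q : (Matrix ι ι L)ˣ) (hQ : ∀ a, Q * j₀ a = j a * Q) :
    IsCyclicSplitting σ j₀ (Q⁻¹ * P * σ • Q.val) b where
  isBaseChange := hj₀
  isUnit := (Q⁻¹.isUnit.mul h.isUnit).mul
    (Q.isUnit.map (MulDistribMulAction.toMonoidHom _ σ))
  mul_smul_eq a := by
    calc Q⁻¹ * P * σ • Q.val * σ • j₀ a = Q⁻¹ * (P * σ • j a) * σ • Q.val := by
          rw [mul_assoc, ← smul_mul', hQ, smul_mul']; simp only [mul_assoc]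
      _ = Q⁻¹ * j a * Q * (Q⁻¹ * P * σ • Q.val) := by
          rw [h.mul_smul_eq]; simp only [mul_assoc, Units.mul_inv_cancel_left]
      _ = j₀ a * (Q⁻¹ * P * σ • Q.val) := by
          rw [mul_assoc _ (j a), ← hQ, Units.inv_mul_cancel_left]
  twistPow_eq := by
    have := twistPow_mul_smul_eq σ (q := Q.val) (x := P) (y := Q⁻¹ * P * σ • Q.val)
      (by simp only [mul_assoc, Units.mul_inv_cancel_left]) (Module.finrank K L)
    rwa [h.twistPow_eq, algEquiv_pow_finrank, one_smul, Algebra.commutes, Units.mul_right_inj,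
      eq_comm] at this

section Galois

variable [FiniteDimensional K L] [IsGalois K L] (hσ : ∀ τ : L ≃ₐ[K] L, τ ∈ Subgroup.zpowers σ)

include hσ

theorem twistPow_smul_eq (h : IsCyclicSplitting σ j P b) (x : L) :
    twistPow σ (x • P) (Module.finrank K L) =
      algebraMap K (Matrix ι ι L) (Algebra.norm K x * b⁻¹) := by
  rw [twistPow_smul σ fun c X => smul_smul_matrix σ c X, h.twistPow_eq,
    twistPow_finrank_eq_norm hσ, algebraMap_smul, map_mul, ← Algebra.smul_def]

theorem smul {x : L} (hx : x ≠ 0) (h : IsCyclicSplitting σ j P (Algebra.norm K x * b)) :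
    IsCyclicSplitting σ j (x • P) b where
  isBaseChange := h.isBaseChange
  isUnit := h.isUnit.smul (Units.mk0 x hx)
  mul_smul_eq a := by rw [smul_mul_assoc, h.mul_smul_eq, mul_smul_comm]
  twistPow_eq := by
    rw [h.twistPow_smul_eq hσ, mul_inv, mul_inv_cancel_left₀]
    exact Algebra.norm_ne_zero_iff.2 hx

variable [Nonempty ι]

theorem exists_eq_norm_mul_of_same {P₁ P₂ : Matrix ι ι L} {b₁ b₂ : K}
    (h₁ : IsCyclicSplitting σ j P₁ b₁) (h₂ : IsCyclicSplitting σ j P₂ b₂) :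
    ∃ x : L, x ≠ 0 ∧ b₁ = Algebra.norm K x * b₂ := by
  obtain ⟨p, hp⟩ := h₁.isUnit
  obtain ⟨x, hx⟩ : ∃ x : L, P₂ * p⁻¹.val = algebraMap L _ x := by
    refine exists_algebraMap_eq_of_commute h₁.isBaseChange fun a => ?_
    have hp_inv : p⁻¹.val * j a = σ • j a * p⁻¹.val := by
      rw [Units.inv_mul_eq_iff_eq_mul, ← mul_assoc, hp, h₁.mul_smul_eq, ← hp,
        Units.mul_inv_cancel_right]
    rw [commute_iff_eq, mul_assoc, hp_inv, ← mul_assoc, h₂.mul_smul_eq, mul_assoc]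
  have hP₂ : P₂ = x • P₁ := by
    rw [Algebra.smul_def, ← hx, ← hp, Units.inv_mul_cancel_right]
  have hb : b₂⁻¹ = Algebra.norm K x * b₁⁻¹ := by
    apply FaithfulSMul.algebraMap_injective K (Matrix ι ι L)
    rw [← h₁.twistPow_smul_eq hσ, ← hP₂, h₂.twistPow_eq]
  have hb₁ := h₁.ne_zero
  have hb₂ := h₂.ne_zero
  refine ⟨x, ?_, ?_⟩
  · rintro rfl
    simp [hb₂] at hb
  · field_simp at hb
    rw [hb, mul_comm]

theorem exists_of_isBaseChange (hj : IsBaseChange L j.toLinearMap) :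
    ∃ (P : Matrix ι ι L) (b : K), IsCyclicSplitting σ j P b := by
  obtain ⟨_, ⟨Q, rfl⟩, hQ⟩ :=
    exists_conj_of_isBaseChange hj ((MulSemiringAction.toAlgHom K _ σ).comp j)
  let P := Q⁻¹.val
  have mul_smul_eq (a : A) : P * σ • j a = j a * P := by
    rw [Units.inv_mul_eq_iff_eq_mul, ← mul_assoc, hQ, Units.mul_inv_cancel_right]
    rfl
  obtain ⟨x, hx⟩ : ∃ x : L, twistPow σ P (Module.finrank K L) = algebraMap L _ x := by
    refine exists_algebraMap_eq_of_commute hj fun a => ?_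
    simpa only [commute_iff_eq, algEquiv_pow_finrank, one_smul] using
      twistPow_mul_smul_eq σ (mul_smul_eq a) (Module.finrank K L)
  have x_fixed : σ x = x := by
    have : P * σ • algebraMap L (Matrix ι ι L) x = P * algebraMap L _ x := by
      rw [← Algebra.commutes, ← hx, ← twistPow, twistPow_succ_right, algEquiv_pow_finrank,
        one_smul]
    rw [Units.mul_right_inj, smul_algebraMap_matrix] at this
    exact FaithfulSMul.algebraMap_injective L (Matrix ι ι L) this
  obtain ⟨k, rfl⟩ := exists_algebraMap_eq_of_generator_apply_eq hσ x_fixed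
  refine ⟨P, k⁻¹, hj, Q⁻¹.isUnit, mul_smul_eq, ?_⟩
  rw [hx, inv_inv, ← IsScalarTower.algebraMap_apply]

theorem exists_eq_norm_mul {j₁ j₂ : A →ₐ[K] Matrix ι ι L} {P₁ P₂ : Matrix ι ι L} {b₁ b₂ : K}
    (h₁ : IsCyclicSplitting σ j₁ P₁ b₁) (h₂ : IsCyclicSplitting σ j₂ P₂ b₂) :
    ∃ x : L, x ≠ 0 ∧ b₁ = Algebra.norm K x * b₂ := by
  obtain ⟨_, ⟨Q, rfl⟩, hQ⟩ := exists_conj_of_isBaseChange h₁.isBaseChange j₂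
  exact h₁.exists_eq_norm_mul_of_same hσ (h₂.conj h₁.isBaseChange Q hQ)

end Galois

end IsCyclicSplitting

section WeightedShift

variable {G R : Type*} [Group G] [DecidableEq G] [Semiring R]

/-- The matrix of the weighted right translation `f ↦ (x ↦ w x * f (x * g))` of functions on `G`,
depending linearly on the weight `w`. -/
def weightedShift (g : G) : (G → R) →ₗ[R] Matrix G G R where
  toFun w := Matrix.of fun x y => if y = x * g then w x else 0
  map_add' w w' := by ext; simp [ite_add_zero]
  map_smul' c w := by ext; simp

theorem weightedShift_apply (g : G) (w : G → R) (x y : G) :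
    weightedShift g w x y = if y = x * g then w x else 0 := rfl

theorem weightedShift_one (w : G → R) : weightedShift 1 w = Matrix.diagonal w := by
  ext x y
  simp [weightedShift_apply, Matrix.diagonal_apply, eq_comm]

theorem single_eq_weightedShift (x y : G) (c : R) :
    Matrix.single x y c = weightedShift (x⁻¹ * y) (Pi.single x c) := by
  ext x' y'
  by_cases hx : x = x'
  · subst hx
    simp [weightedShift_apply, Matrix.single_apply, eq_comm]
  · simp [weightedShift_apply, hx]

theorem weightedShift_mul_weightedShift [Fintype G] (g h : G) (w w' : G → R) :
    weightedShift g w * weightedShift h w' = weightedShift (g * h) fun x => w x * w' (x * g) := by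
  ext x y
  rw [Matrix.mul_apply, Finset.sum_eq_single (x * g)]
  · simp [weightedShift_apply, mul_assoc]
  · intro z _ hz
    simp [weightedShift_apply, hz]
  · simp

theorem weightedShift_pow {R : Type*} [CommSemiring R] [Fintype G] (g : G) (w : G → R) (k : ℕ) :
    weightedShift g w ^ k =
      weightedShift (g ^ k) fun x => ∏ i ∈ Finset.range k, w (x * g ^ i) := by
  induction k with
  | zero => simpa [Pi.one_def] using (weightedShift_one (1 : G → R)).symm
  | succ k ih =>
    simp only [pow_succ, ih, weightedShift_mul_weightedShift, Finset.prod_range_succ]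

theorem smul_weightedShift {H : Type*} [Monoid H] [MulSemiringAction H R] (h : H) (g : G)
    (w : G → R) : h • weightedShift g w = weightedShift g fun x => h • w x := by
  ext x y
  simp [weightedShift_apply, apply_ite (h • ·)]

end WeightedShift

namespace CyclicAlg

section Regular

variable {K L : Type*} [Field K] [Field L] [Algebra K L]
  [DecidableEq (L ≃ₐ[K] L)] {σ : L ≃ₐ[K] L}

/-- The weights `b, 1, …, 1` of the shift by which the regular representation maps `v`. -/
def regWeight (b : K) (τ : L ≃ₐ[K] L) : L := if τ = 1 then algebraMap K L b else 1

theorem regWeight_ne_zero {b : K} (hb : b ≠ 0) (τ : L ≃ₐ[K] L) : regWeight b τ ≠ 0 := by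
  unfold regWeight
  split_ifs <;> simp [hb]

theorem smul_weightedShift_regWeight (τ : L ≃ₐ[K] L) (b : K) :
    τ • weightedShift σ (regWeight (L := L) b) = weightedShift σ (regWeight b) := by
  rw [smul_weightedShift]
  congr 1
  ext ρ
  by_cases hρ : ρ = 1 <;> simp [regWeight, hρ]

variable [FiniteDimensional K L] [IsGalois K L] (hσ : ∀ τ : L ≃ₐ[K] L, τ ∈ Subgroup.zpowers σ)

include hσ

theorem weightedShift_regWeight_pow_finrank (b : K) :
    weightedShift σ (regWeight b) ^ Module.finrank K L =
      algebraMap K (Matrix (L ≃ₐ[K] L) (L ≃ₐ[K] L) L) b := by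
  rw [weightedShift_pow, algEquiv_pow_finrank, weightedShift_one, ← IsGalois.card_aut_eq_finrank]
  simp only [prod_range_card_mul_pow hσ]
  simp [regWeight, Matrix.algebraMap_eq_diagonal]

/-- The regular representation of `(L/K, b)` by matrices over `L`. -/
noncomputable def reg (b : K) :
    CyclicAlg K L σ (Module.finrank K L) b →ₐ[K] Matrix (L ≃ₐ[K] L) (L ≃ₐ[K] L) L :=
  lift ((Matrix.diagonalAlgHom K).comp (conjugates K L)) (weightedShift σ (regWeight b))
    (weightedShift_regWeight_pow_finrank hσ b) fun x => by
      simp only [AlgHom.comp_apply, Matrix.diagonalAlgHom_apply, ← weightedShift_one,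
        weightedShift_mul_weightedShift]
      simp [mul_comm]

theorem reg_incl (b : K) (x : L) :
    reg hσ b (incl σ _ b x) = weightedShift 1 (conjugates K L x) := by
  rw [reg, lift_incl, weightedShift_one]
  rfl

theorem reg_cycV (b : K) : reg hσ b (cycV K L σ _ b) = weightedShift σ (regWeight b) :=
  lift_cycV ..

theorem weightedShift_mem_span_range_reg {b : K} (hb : b ≠ 0) (τ : L ≃ₐ[K] L)
    (w : (L ≃ₐ[K] L) → L) : weightedShift τ w ∈ Submodule.span L (Set.range (reg hσ b)) := by
  obtain ⟨k, rfl⟩ := mem_powers_iff_mem_zpowers.2 (hσ τ)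
  let u (ρ : L ≃ₐ[K] L) : L := ∏ i ∈ Finset.range k, regWeight b (ρ * σ ^ i)
  have u_ne_zero (ρ : L ≃ₐ[K] L) : u ρ ≠ 0 :=
    Finset.prod_ne_zero_iff.2 fun _ _ => regWeight_ne_zero hb _
  have reg_apply (x : L) :
      reg hσ b (incl σ _ b x * cycV K L σ _ b ^ k) =
        weightedShift (σ ^ k) (conjugates K L x * u) := by
    rw [map_mul, map_pow, reg_incl, reg_cycV, weightedShift_pow, weightedShift_mul_weightedShift,
      one_mul]
    simp [u, Pi.mul_def]
  have map_le : Submodule.map ((weightedShift (σ ^ k)).comp (LinearMap.mulRight L u)) ⊤ ≤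
      Submodule.span L (Set.range (reg hσ b)) := by
    rw [← span_range_conjugates_eq_top, Submodule.map_span_le]
    rintro _ ⟨x, rfl⟩
    exact Submodule.subset_span ⟨_, reg_apply x⟩
  have div_mul_u : w / u * u = w := funext fun ρ => div_mul_cancel₀ _ (u_ne_zero ρ)
  exact div_mul_u ▸ map_le ⟨w / u, trivial, rfl⟩

theorem isBaseChange_reg {b : K} (hb : b ≠ 0) : IsBaseChange L (reg hσ b).toLinearMap := by
  have hn : 0 < Module.finrank K L := Module.finrank_pos
  have := finite σ b hn
  refine isBaseChange_of_span_range_eq_top (eq_top_iff.2 fun X _ => ?_) ?_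
  · rw [Matrix.matrix_eq_sum_single X]
    refine sum_mem fun τ _ => sum_mem fun ρ _ => ?_
    rw [single_eq_weightedShift]
    exact weightedShift_mem_span_range_reg hσ hb _ _
  · rw [Module.finrank_matrix, ← Nat.card_eq_fintype_card, IsGalois.card_aut_eq_finrank,
      Module.finrank_self, mul_one]
    exact finrank_le σ b hn

theorem smul_reg_mul (b : K) (a : CyclicAlg K L σ (Module.finrank K L) b) :
    σ • reg hσ b a * weightedShift σ (regWeight b) =
      weightedShift σ (regWeight b) * reg hσ b a := by
  induction a using induction_on with
  | incl x =>
    rw [reg_incl, smul_weightedShift, weightedShift_mul_weightedShift,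
      weightedShift_mul_weightedShift, one_mul, mul_one]
    congr 1
    ext τ
    obtain ⟨k, rfl⟩ := hσ τ
    have : σ * σ ^ k = σ ^ k * σ := (Commute.refl σ).zpow_right k
    simpa [mul_comm] using congr(regWeight b (σ ^ k) * $this x)
  | cycV => rw [reg_cycV, smul_weightedShift_regWeight]
  | mul x y hx hy => rw [map_mul, smul_mul', mul_assoc, hy, ← mul_assoc, hx, mul_assoc]
  | add x y hx hy => rw [map_add, smul_add, add_mul, hx, hy, mul_add]

theorem isUnit_weightedShift_regWeight {b : K} (hb : b ≠ 0) :
    IsUnit (weightedShift σ (regWeight (L := L) b)) := by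
  rw [← isUnit_pow_iff (Module.finrank_pos (R := K) (M := L)).ne',
    weightedShift_regWeight_pow_finrank hσ]
  exact (isUnit_iff_ne_zero.2 hb).map _

theorem exists_isCyclicSplitting_reg {b : K} (hb : b ≠ 0) :
    ∃ P, IsCyclicSplitting σ (reg hσ b) P b := by
  obtain ⟨V, hV⟩ := isUnit_weightedShift_regWeight hσ hb
  have smul_inv : σ • V⁻¹.val = V⁻¹ := by
    refine (Units.inv_eq_of_mul_eq_one_right ?_).symm
    calc V.val * σ • V⁻¹.val = σ • (V.val * V⁻¹.val) := by
          rw [smul_mul', hV, smul_weightedShift_regWeight]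
      _ = 1 := by rw [Units.mul_inv, smul_one]
  refine ⟨V⁻¹.val, isBaseChange_reg hσ hb, V⁻¹.isUnit, fun a => ?_, ?_⟩
  · rw [Units.inv_mul_eq_iff_eq_mul, ← mul_assoc, Units.eq_mul_inv_iff_mul_eq, hV]
    exact smul_reg_mul hσ b a
  · rw [twistPow_eq_pow smul_inv, ← Units.val_pow_eq_pow_val, inv_pow]
    refine Units.inv_eq_of_mul_eq_one_right ?_
    rw [Units.val_pow_eq_pow_val, hV, weightedShift_regWeight_pow_finrank hσ, ← map_mul,
      mul_inv_cancel₀ hb, map_one]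

omit [DecidableEq (L ≃ₐ[K] L)] in
theorem finrank_eq {b : K} (hb : b ≠ 0) :
    Module.finrank K (CyclicAlg K L σ (Module.finrank K L) b) = Module.finrank K L ^ 2 := by
  classical
  obtain ⟨P, h⟩ := exists_isCyclicSplitting_reg hσ hb
  rw [h.finrank_eq, ← Nat.card_eq_fintype_card, IsGalois.card_aut_eq_finrank]

end Regular

end CyclicAlg

namespace CyclicAlg

section Matrices

variable {K L ι : Type*} [Field K] [Field L] [Algebra K L] [Fintype ι] [DecidableEq ι]
  (σ : L ≃ₐ[K] L) (n : ℕ) (b : K)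

theorem scalar_cycV_mul_mapMatrix_incl (X : Matrix ι ι L) :
    Matrix.scalar ι (cycV K L σ n b) * (incl σ n b).mapMatrix X =
      (incl σ n b).mapMatrix (σ • X) * Matrix.scalar ι (cycV K L σ n b) := by
  ext i k
  simpa [Matrix.diagonal_mul, Matrix.mul_diagonal] using cycV_mul_incl σ n b (X i k)

theorem scalar_cycV_pow :
    Matrix.scalar ι (cycV K L σ n b) ^ n = algebraMap K (Matrix ι ι _) b := by
  rw [← map_pow, cycV_pow]
  rfl

theorem mapMatrix_incl_mul_scalar_cycV_pow (X : Matrix ι ι L) :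
    ((incl σ n b).mapMatrix X * Matrix.scalar ι (cycV K L σ n b)) ^ n =
      (incl σ n b).mapMatrix (twistPow σ X n) * algebraMap K _ b := by
  let φ : Matrix ι ι L →ₐ[K] Matrix ι ι (CyclicAlg K L σ n b) := (incl σ n b).mapMatrix
  rw [← scalar_cycV_pow]
  exact map_mul_pow_eq_map_twistPow_mul σ (φ : Matrix ι ι L →* Matrix ι ι (CyclicAlg K L σ n b))
    (scalar_cycV_mul_mapMatrix_incl σ n b) X n

variable {σ n b}

theorem subalgebra_matrix_eq_top {S : Subalgebra K (Matrix ι ι (CyclicAlg K L σ n b))}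
    (incl_mem : ∀ X, (incl σ n b).mapMatrix X ∈ S)
    (cycV_mem : Matrix.scalar ι (cycV K L σ n b) ∈ S) : S = ⊤ := by
  suffices single_mem : ∀ (y : CyclicAlg K L σ n b) (i k : ι), Matrix.single i k y ∈ S by
    refine eq_top_iff.2 fun Y _ => ?_
    rw [Matrix.matrix_eq_sum_single Y]
    exact sum_mem fun i _ => sum_mem fun k _ => single_mem (Y i k) i k
  intro y
  induction y using induction_on with
  | incl x =>
    intro i k
    simpa [Matrix.map_single] using incl_mem (Matrix.single i k x)
  | cycV =>
    intro i k
    convert mul_mem (incl_mem (Matrix.single i k 1)) cycV_mem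
    ext r s
    simp [Matrix.mul_diagonal, Matrix.single_apply]
  | mul x y hx hy =>
    intro i k
    rw [← Matrix.single_mul_single_same x i k k y]
    exact mul_mem (hx i k) (hy k k)
  | add x y hx hy =>
    intro i k
    rw [Matrix.single_add]
    exact add_mem (hx i k) (hy i k)

end Matrices

end CyclicAlg

namespace IsCyclicSplitting

open CyclicAlg

variable {K L ι A : Type*} [Field K] [Field L] [Algebra K L] [Fintype ι] [DecidableEq ι]
  [Nonempty ι] [Ring A] [Algebra K A] {σ : L ≃ₐ[K] L} {j : A →ₐ[K] Matrix ι ι L}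
  {P : Matrix ι ι L} {b : K} (h : IsCyclicSplitting σ j P b) (c : K)

/-- The homomorphism `(L/K, c) → M_ι((L/K, bc))` sending `x : L` to the scalar matrix `x` and `v`
to `P v`. -/
noncomputable def cyclicHom :
    CyclicAlg K L σ (Module.finrank K L) c →ₐ[K]
      Matrix ι ι (CyclicAlg K L σ (Module.finrank K L) (b * c)) :=
  lift ((incl σ _ (b * c)).mapMatrix.comp (Matrix.scalarAlgHom ι K))
    ((incl σ _ (b * c)).mapMatrix P * Matrix.scalar ι (cycV K L σ _ (b * c)))
    (by
      rw [mapMatrix_incl_mul_scalar_cycV_pow, h.twistPow_eq, AlgHom.commutes, ← map_mul,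
        inv_mul_cancel_left₀ h.ne_zero])
    (fun x => by
      rw [mul_assoc, AlgHom.comp_apply, scalar_cycV_mul_mapMatrix_incl, ← mul_assoc, ← map_mul,
        AlgHom.comp_apply, ← mul_assoc, ← map_mul]
      congr 2
      exact (congr_arg _ (smul_algebraMap_matrix σ x)).trans (Algebra.commutes _ _).symm)

theorem cyclicHom_incl (x : L) : h.cyclicHom c (incl σ _ c x) =
    (incl σ _ (b * c)).mapMatrix (algebraMap L (Matrix ι ι L) x) :=
  lift_incl ..

theorem cyclicHom_cycV : h.cyclicHom c (cycV K L σ _ c) =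
    (incl σ _ (b * c)).mapMatrix P * Matrix.scalar ι (cycV K L σ _ (b * c)) :=
  lift_cycV ..

theorem commute_cyclicHom (a : A) (y : CyclicAlg K L σ (Module.finrank K L) c) :
    Commute ((incl σ _ (b * c)).mapMatrix (j a)) (h.cyclicHom c y) := by
  induction y using CyclicAlg.induction_on with
  | incl x =>
    rw [cyclicHom_incl]
    exact (Algebra.commute_algebraMap_right x (j a)).map (incl σ _ (b * c)).mapMatrix
  | cycV =>
    rw [cyclicHom_cycV, commute_iff_eq, mul_assoc, scalar_cycV_mul_mapMatrix_incl,
      ← mul_assoc, ← mul_assoc, ← map_mul, ← map_mul, h.mul_smul_eq]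
  | mul x y hx hy => rw [map_mul]; exact hx.mul_right hy
  | add x y hx hy => rw [map_add]; exact hx.add_right hy

/-- The homomorphism `A ⊗ (L/K, c) → M_ι((L/K, bc))` given by `j` and `cyclicHom`. -/
noncomputable def tensorHom :
    A ⊗[K] CyclicAlg K L σ (Module.finrank K L) c →ₐ[K]
      Matrix ι ι (CyclicAlg K L σ (Module.finrank K L) (b * c)) :=
  Algebra.TensorProduct.lift ((incl σ _ (b * c)).mapMatrix.comp j) (h.cyclicHom c)
    (h.commute_cyclicHom c)

theorem tensorHom_tmul_one (a : A) :
    h.tensorHom c (a ⊗ₜ 1) = (incl σ _ (b * c)).mapMatrix (j a) :=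
  (Algebra.TensorProduct.lift_tmul ..).trans (by rw [map_one, mul_one]; rfl)

theorem tensorHom_one_tmul (y : CyclicAlg K L σ (Module.finrank K L) c) :
    h.tensorHom c (1 ⊗ₜ y) = h.cyclicHom c y :=
  (Algebra.TensorProduct.lift_tmul ..).trans (by rw [map_one, one_mul])

theorem tensorHom_surjective : Function.Surjective (h.tensorHom c) := by
  have cyclicHom_mem (y) : h.cyclicHom c y ∈ (h.tensorHom c).range :=
    ⟨1 ⊗ₜ y, h.tensorHom_one_tmul c y⟩
  have incl_mem (X : Matrix ι ι L) : (incl σ _ (b * c)).mapMatrix X ∈ (h.tensorHom c).range := by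
    induction X using h.isBaseChange.inductionOn with
    | zero => rw [map_zero]; exact zero_mem _
    | tmul a => exact ⟨a ⊗ₜ 1, h.tensorHom_tmul_one c a⟩
    | smul x X hX =>
      rw [Algebra.smul_def, map_mul, ← h.cyclicHom_incl]
      exact mul_mem (cyclicHom_mem _) hX
    | add X Y hX hY => rw [map_add]; exact add_mem hX hY
  have cycV_mem : Matrix.scalar ι (cycV K L σ _ (b * c)) ∈ (h.tensorHom c).range := by
    obtain ⟨Q, hQ⟩ := h.isUnit.exists_left_inv
    have := mul_mem (incl_mem Q) (cyclicHom_mem (cycV K L σ _ c))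
    rwa [cyclicHom_cycV, ← mul_assoc, ← map_mul, hQ, map_one, one_mul] at this
  rw [← AlgHom.range_eq_top]
  exact subalgebra_matrix_eq_top incl_mem cycV_mem

variable [FiniteDimensional K L] [IsGalois K L] (hσ : ∀ τ : L ≃ₐ[K] L, τ ∈ Subgroup.zpowers σ)

include h hσ

variable {c} in
theorem nonempty_tensor_algEquiv (hc : c ≠ 0) :
    Nonempty (A ⊗[K] CyclicAlg K L σ (Module.finrank K L) c ≃ₐ[K]
      Matrix ι ι (CyclicAlg K L σ (Module.finrank K L) (b * c))) := by
  classical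
  have hn : 0 < Module.finrank K L := Module.finrank_pos
  have := h.finite
  have := CyclicAlg.finite σ c hn
  have := CyclicAlg.finite σ (b * c) hn
  have injective : Function.Injective (h.tensorHom c) :=
    (LinearMap.injective_iff_surjective_of_finrank_eq_finrank (f := (h.tensorHom c).toLinearMap) (by
      rw [Module.finrank_tensorProduct, Module.finrank_matrix, h.finrank_eq, sq,
        CyclicAlg.finrank_eq hσ hc, CyclicAlg.finrank_eq hσ (mul_ne_zero h.ne_zero hc)])).2
      (h.tensorHom_surjective c)
  exact ⟨.ofBijective _ ⟨injective, h.tensorHom_surjective c⟩⟩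

end IsCyclicSplitting

namespace CyclicAlg

section Split

variable {K L : Type*} [Field K] [Field L] [Algebra K L] [FiniteDimensional K L] [IsGalois K L]

variable (σ : L ≃ₐ[K] L)

/-- The representation of `(L/K, 1)` on `L` by multiplications and `v ↦ σ`. -/
noncomputable def toEnd : CyclicAlg K L σ (Module.finrank K L) 1 →ₐ[K] Module.End K L :=
  lift (Algebra.lmul K L) σ.toLinearMap
    (by
      rw [← AlgEquiv.pow_toLinearMap, algEquiv_pow_finrank, map_one]
      rfl)
    (fun x => by ext; simp)

theorem toEnd_incl (x : L) : toEnd σ (incl σ _ 1 x) = Algebra.lmul K L x := lift_incl ..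

theorem toEnd_cycV_pow (k : ℕ) : toEnd σ (cycV K L σ _ 1 ^ k) = (σ ^ k).toLinearMap := by
  rw [map_pow, toEnd, lift_cycV, AlgEquiv.pow_toLinearMap]

variable {σ} (hσ : ∀ τ : L ≃ₐ[K] L, τ ∈ Subgroup.zpowers σ)

include hσ

theorem toEnd_surjective : Function.Surjective (toEnd σ) := by
  intro f
  have hf := span_range_automorphisms_eq_top (K := K) (L := L) ▸ Submodule.mem_top (x := f)
  induction hf using Submodule.span_induction with
  | mem f hf =>
    obtain ⟨τ, rfl⟩ := hf
    obtain ⟨k, rfl⟩ := mem_powers_iff_mem_zpowers.2 (hσ τ)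
    exact ⟨_, toEnd_cycV_pow σ k⟩
  | zero => exact ⟨0, map_zero _⟩
  | add f g _ _ hf hg =>
    obtain ⟨x, rfl⟩ := hf
    obtain ⟨y, rfl⟩ := hg
    exact ⟨x + y, map_add _ x y⟩
  | smul x f _ hf =>
    obtain ⟨y, rfl⟩ := hf
    exact ⟨incl σ _ 1 x * y, by rw [map_mul, toEnd_incl]; rfl⟩

theorem nonempty_algEquiv_matrix :
    Nonempty (CyclicAlg K L σ (Module.finrank K L) 1 ≃ₐ[K]
      Matrix (Fin (Module.finrank K L)) (Fin (Module.finrank K L)) K) := by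
  classical
  have := finite σ (1 : K) (Module.finrank_pos (R := K) (M := L))
  have finrank_eq : Module.finrank K (CyclicAlg K L σ (Module.finrank K L) 1) =
      Module.finrank K (Module.End K L) := by
    rw [finrank_eq hσ one_ne_zero, Module.finrank_linearMap, sq]
  have injective : Function.Injective (toEnd σ) :=
    (LinearMap.injective_iff_surjective_of_finrank_eq_finrank (f := (toEnd σ).toLinearMap)
      finrank_eq).2 (toEnd_surjective hσ)
  exact ⟨(AlgEquiv.ofBijective _ ⟨injective, toEnd_surjective hσ⟩).trans
    (algEquivMatrix (Module.finBasis K L))⟩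

end Split

end CyclicAlg

section Classification

variable {K L : Type*} [Field K] [Field L] [Algebra K L] [FiniteDimensional K L] [IsGalois K L]
  {σ : L ≃ₐ[K] L} (hσ : ∀ τ : L ≃ₐ[K] L, τ ∈ Subgroup.zpowers σ)

include hσ

theorem IsCyclicSplitting.brauerEquiv {ι A : Type*} [Fintype ι] [DecidableEq ι] [Nonempty ι]
    [Ring A] [Algebra K A] {j : A →ₐ[K] Matrix ι ι L} {P : Matrix ι ι L} {b : K}
    (h : IsCyclicSplitting σ j P b) :
    BrauerEquiv K A (CyclicAlg K L σ (Module.finrank K L) b) := by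
  obtain ⟨e⟩ := CyclicAlg.nonempty_algEquiv_matrix hσ
  obtain ⟨f⟩ := h.nonempty_tensor_algEquiv hσ one_ne_zero
  rw [mul_one] at f
  have : Nonempty (Fin (Module.finrank K L)) := ⟨⟨0, Module.finrank_pos⟩⟩
  exact brauerEquiv_of_algEquiv_matrix_matrix <| (matrixEquivTensor _ K A).trans <|
    (Algebra.TensorProduct.congr .refl e.symm).trans f

namespace CyclicAlg

theorem brauerEquiv_tensor {b₁ b₂ : K} (hb₁ : b₁ ≠ 0) (hb₂ : b₂ ≠ 0) :
    BrauerEquiv K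
      (CyclicAlg K L σ (Module.finrank K L) b₁ ⊗[K] CyclicAlg K L σ (Module.finrank K L) b₂)
      (CyclicAlg K L σ (Module.finrank K L) (b₁ * b₂)) := by
  classical
  obtain ⟨P, h⟩ := exists_isCyclicSplitting_reg hσ hb₁
  obtain ⟨e⟩ := h.nonempty_tensor_algEquiv hσ hb₂
  exact brauerEquiv_of_algEquiv_matrix e

theorem brauerEquiv_norm_mul {x : L} (hx : x ≠ 0) {b : K} (hb : b ≠ 0) :
    BrauerEquiv K (CyclicAlg K L σ (Module.finrank K L) (Algebra.norm K x * b))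
      (CyclicAlg K L σ (Module.finrank K L) b) := by
  classical
  obtain ⟨P, h⟩ := exists_isCyclicSplitting_reg hσ (mul_ne_zero (Algebra.norm_ne_zero_iff.2 hx) hb)
  exact (h.smul hσ hx).brauerEquiv hσ

theorem exists_eq_norm_mul_of_brauerEquiv {b₁ b₂ : K} (hb₁ : b₁ ≠ 0) (hb₂ : b₂ ≠ 0)
    (h : BrauerEquiv K (CyclicAlg K L σ (Module.finrank K L) b₁)
      (CyclicAlg K L σ (Module.finrank K L) b₂)) :
    ∃ x : L, x ≠ 0 ∧ b₁ = Algebra.norm K x * b₂ := by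
  classical
  obtain ⟨m, k, hm, -, ⟨e⟩⟩ := h
  obtain rfl : m = k := by
    have := e.toLinearEquiv.finrank_eq
    rw [Module.finrank_matrix, Module.finrank_matrix, finrank_eq hσ hb₁, finrank_eq hσ hb₂] at this
    have := Nat.eq_of_mul_eq_mul_right (pow_pos Module.finrank_pos 2) this
    simpa [← sq] using this
  have : Nonempty (Fin m) := ⟨⟨0, hm⟩⟩
  obtain ⟨P₁, h₁⟩ := exists_isCyclicSplitting_reg hσ hb₁
  obtain ⟨P₂, h₂⟩ := exists_isCyclicSplitting_reg hσ hb₂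
  exact (h₁.matrix (Fin m)).exists_eq_norm_mul hσ ((h₂.matrix (Fin m)).comp_algEquiv e)

end CyclicAlg

theorem exists_brauerEquiv_cyclicAlg_of_algEquiv_matrix {ι A : Type*} [Fintype ι] [DecidableEq ι]
    [Nonempty ι] [Ring A] [Algebra K A] (e : L ⊗[K] A ≃ₐ[L] Matrix ι ι L) :
    ∃ b : K, b ≠ 0 ∧ BrauerEquiv K A (CyclicAlg K L σ (Module.finrank K L) b) := by
  let j : A →ₐ[K] Matrix ι ι L :=
    (e.toAlgHom.restrictScalars K).comp Algebra.TensorProduct.includeRight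
  have isBaseChange : IsBaseChange L j.toLinearMap := .of_equiv e.toLinearEquiv fun _ => rfl
  obtain ⟨P, b, h⟩ := IsCyclicSplitting.exists_of_isBaseChange hσ isBaseChange
  exact ⟨b, h.ne_zero, h.brauerEquiv hσ⟩

end Classification

/-- Let `L/K` be a cyclic Galois extension of degree `n` with `Gal(L/K) = ⟨σ⟩`.  The map
`K^×/N_{L/K}(L^×) → Br(L/K)`, sending the class of `b` to the class of the cyclic algebra
`(L/K, b)`, is a group isomorphism onto the relative Brauer group: it is a homomorphism
(`(L/K,b₁) ⊗ (L/K,b₂)` is Brauer-equivalent to `(L/K,b₁b₂)`), it identifies classes of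
cyclic algebras exactly when the parameters differ by a norm from `L^×`, and every finite
dimensional central simple `K`-algebra split by `L` is Brauer-equivalent to some
`(L/K,b)`. -/
theorem cyclic_algebra_brauer_group_iso (K L : Type u) [Field K] [Field L] [Algebra K L]
    [IsGalois K L] [FiniteDimensional K L] (n : ℕ) (hn : 0 < n)
    (hdeg : Module.finrank K L = n) (σ : L ≃ₐ[K] L)
    (hσ : ∀ τ : L ≃ₐ[K] L, τ ∈ Subgroup.zpowers σ) :
    (∀ b₁ b₂ : K, b₁ ≠ 0 → b₂ ≠ 0 →
      BrauerEquiv K (TensorProduct K (CyclicAlg K L σ n b₁) (CyclicAlg K L σ n b₂))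
        (CyclicAlg K L σ n (b₁ * b₂))) ∧
    (∀ b₁ b₂ : K, b₁ ≠ 0 → b₂ ≠ 0 →
      (BrauerEquiv K (CyclicAlg K L σ n b₁) (CyclicAlg K L σ n b₂) ↔
        ∃ x : L, x ≠ 0 ∧ b₁ = Algebra.norm K x * b₂)) ∧
    (∀ (A : Type u) [Ring A] [Algebra K A], FiniteDimensional K A →
      Algebra.IsCentral K A → IsSimpleRing A →
      (∃ m : ℕ, 0 < m ∧
        Nonempty (TensorProduct K L A ≃ₐ[L] Matrix (Fin m) (Fin m) L)) →
      ∃ b : K, b ≠ 0 ∧ BrauerEquiv K A (CyclicAlg K L σ n b)) := by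
  subst hdeg
  refine ⟨fun b₁ b₂ hb₁ hb₂ => CyclicAlg.brauerEquiv_tensor hσ hb₁ hb₂, fun b₁ b₂ hb₁ hb₂ =>
    ⟨CyclicAlg.exists_eq_norm_mul_of_brauerEquiv hσ hb₁ hb₂, ?_⟩, ?_⟩
  · rintro ⟨x, hx, rfl⟩
    exact CyclicAlg.brauerEquiv_norm_mul hσ hx hb₂
  · rintro A _ _ - - - ⟨m, hm, ⟨e⟩⟩
    have : Nonempty (Fin m) := ⟨⟨0, hm⟩⟩
    exact exists_brauerEquiv_cyclicAlg_of_algEquiv_matrix hσ e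
end
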